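/- There exist constants ν₀ ∈ (0,1], C₁ > 0 and, for each p ≥ 0, a constant c(p) > 0, all depending only on f and D (and p), such that for every ν ∈ (0,ν₀] and every ℓ ∈ (0, C₁ν], the structure function satisfies S_p(ℓ) ≥ c(p) ℓ^p if 0 ≤ p ≤ 1, and S_p(ℓ) ≥ c(p) ℓ^p ν^{−(p−1)} if p ≥ 1. -/

import Mathlib

open MeasureTheory Set
open scoped ENNReal

/-- The `L^p` norm (on the circle, i.e. over one period `(0,1]`) of the `m`-th
derivative of a function `v : ℝ → ℝ` (identified with a function on `S¹ = ℝ/ℤ`). -/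
noncomputable def sobLp (m : ℕ) (p : ℝ≥0∞) (v : ℝ → ℝ) : ℝ :=
  (eLpNorm (iteratedDeriv m v) p (volume.restrict (Ioc (0:ℝ) 1))).toReal

/-- `u` is a smooth, space-periodic, zero-mean-value solution of the generalised
Burgers equation `u_t + f'(u) u_x - ν u_xx = 0` with strongly convex `f` and
nonzero initial condition. -/
structure IsBurgersSolution (f : ℝ → ℝ) (σ ν : ℝ) (u : ℝ → ℝ → ℝ) : Prop where
  hf : ContDiff ℝ (⊤ : ℕ∞) f
  hσ : 0 < σ
  hconv : ∀ y, σ ≤ iteratedDeriv 2 f y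
  hν : 0 < ν
  hu : ContDiffOn ℝ (⊤ : ℕ∞) (Function.uncurry u) (Ici (0:ℝ) ×ˢ univ)
  hper : ∀ t x, u t (x + 1) = u t x
  hpde : ∀ t, 0 < t → ∀ x,
    deriv (fun s => u s x) t + deriv f (u t x) * deriv (u t) x
      - ν * deriv (deriv (u t)) x = 0
  hmean : ∀ t, 0 ≤ t → ∫ x in Ioc (0:ℝ) 1, u t x = 0
  hinit : ∃ x, u 0 x ≠ 0

/-- The quantity `D = max(|u₀|₁⁻¹, |u₀|_{1,∞})`. -/
noncomputable def burgersD (u : ℝ → ℝ → ℝ) : ℝ :=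
  max (sobLp 0 1 (u 0))⁻¹ (sobLp 1 ⊤ (u 0))

/-- `T₁ = D⁻² C̃⁻¹ / 4`. -/
noncomputable def burgersT₁ (D Ct : ℝ) : ℝ := (D ^ 2)⁻¹ * Ct⁻¹ / 4

/-- `T₂ = max(3T₁/2, 2Dσ⁻¹)`. -/
noncomputable def burgersT₂ (σ D Ct : ℝ) : ℝ :=
  max (3 / 2 * burgersT₁ D Ct) (2 * D * σ⁻¹)

/-- Time average over `[T₁, T₂]`. -/
noncomputable def timeAvg (T₁ T₂ : ℝ) (A : ℝ → ℝ) : ℝ :=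
  (T₂ - T₁)⁻¹ * ∫ t in T₁..T₂, A t

/-- The structure function `S_p(ℓ)`. -/
noncomputable def structFun (T₁ T₂ : ℝ) (u : ℝ → ℝ → ℝ) (p ℓ : ℝ) : ℝ :=
  timeAvg T₁ T₂ (fun t => ∫ x in Ioc (0:ℝ) 1, |u t (x + ℓ) - u t x| ^ p)

/-! Oleinik's one-sided bound `u_x ≤ D / (1 + σ D t)` forces the energy `‖u‖²` to drop between `T₁`
and `T₂`. Since `2ν {‖u_x‖²}` is exactly that drop, `{‖u_x‖²} ≳ ν⁻¹`, whereas the enstrophy balance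
gives `{‖u_xx‖²} ≲ ν⁻³`. For `ℓ ≤ C₁ ν` the increments are therefore governed by their first-order
Taylor term, and `S₂(ℓ) ≳ ℓ² ν⁻¹`. On the other hand `S₁(ℓ) ≲ ℓ`, because increments have mean zero
and are at most `D ℓ`, and `S₃(ℓ) ≲ ℓ³ ν⁻²` by the pointwise bounds on `u_x`. With `m = ν` and
`δ = ℓ / ν` the three moments read `S₁ ≲ m δ`, `S₂ ≳ m δ²`, `S₃ ≲ m δ³`, and Hölder interpolation
through them gives `S_p ≳ m δ ^ p` for every `p ≥ 0`. For `p ≤ 1` the case `p = 1` is better: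
`S₁ ≤ 2 (D ℓ) ^ (1 - p) S_p`, as only the positive part of an increment matters and it is at most
`D ℓ`. -/

open Filter Topology Function
open scoped ContDiff

theorem sq_integral_le_mul_integral_sq {g : ℝ → ℝ} {a b : ℝ} (hab : a ≤ b)
    (hg : IntervalIntegrable g volume a b)
    (hg2 : IntervalIntegrable (fun x => g x ^ 2) volume a b) :
    (∫ x in a..b, g x) ^ 2 ≤ (b - a) * ∫ x in a..b, g x ^ 2 := by
  rcases hab.eq_or_lt with rfl | hlt
  · simp
  have hpos : 0 < b - a := sub_pos.2 hlt
  set m := ∫ x in a..b, g x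
  have hvar : ∫ x in a..b, ((b - a) * g x - m) ^ 2
      = (b - a) * ((b - a) * (∫ x in a..b, g x ^ 2) - m ^ 2) := by
    have hexp : ∀ x, ((b - a) * g x - m) ^ 2
        = (b - a) ^ 2 * g x ^ 2 - 2 * (b - a) * m * g x + m ^ 2 := fun x => by ring
    simp only [hexp]
    rw [intervalIntegral.integral_add ((hg2.const_mul _).sub (hg.const_mul _))
        intervalIntegrable_const,
      intervalIntegral.integral_sub (hg2.const_mul _) (hg.const_mul _),
      intervalIntegral.integral_const_mul, intervalIntegral.integral_const_mul,
      intervalIntegral.integral_const, smul_eq_mul]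
    ring
  have hnonneg := intervalIntegral.integral_nonneg (μ := volume) hab
    fun x _ => sq_nonneg ((b - a) * g x - m)
  rw [hvar] at hnonneg
  exact sub_nonneg.1 (nonneg_of_mul_nonneg_right hnonneg hpos)

section Periodic

variable {g w v : ℝ → ℝ} {T ℓ : ℝ}

theorem periodic_deriv (hv : Periodic v T) : Periodic (deriv v) T := fun x => by
  rw [← deriv_comp_add_const, funext hv]

theorem integral_comp_add_right_of_periodic (hg : Periodic g T) (s : ℝ) :
    ∫ x in 0..T, g (x + s) = ∫ x in 0..T, g x := by
  rw [intervalIntegral.integral_comp_add_right, zero_add, add_comm T s,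
    hg.intervalIntegral_add_eq s 0, zero_add]

theorem continuous_integral_comp_add (hg : Continuous g) (ℓ : ℝ) :
    Continuous fun x => ∫ s in 0..ℓ, g (x + s) :=
  intervalIntegral.continuous_parametric_intervalIntegral_of_continuous' (by fun_prop) 0 ℓ

theorem integral_integral_comp_add_of_periodic (hg : Continuous g) (hgT : Periodic g T) (ℓ : ℝ) :
    ∫ x in 0..T, ∫ s in 0..ℓ, g (x + s) = ℓ * ∫ x in 0..T, g x := by
  have hcont : Continuous (uncurry fun x s => g (x + s)) := by
    unfold uncurry
    fun_prop
  rw [intervalIntegral_intervalIntegral_swap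
    ((hcont.continuousOn.integrableOn_compact (isCompact_uIcc.prod isCompact_uIcc)).mono_set
      (prod_mono uIoc_subset_uIcc uIoc_subset_uIcc))]
  simp only [integral_comp_add_right_of_periodic hgT, intervalIntegral.integral_const, sub_zero,
    smul_eq_mul]

theorem integral_sq_integral_comp_add_le (hg : Continuous g) (hgT : Periodic g T) (hT : 0 ≤ T)
    (hℓ : 0 ≤ ℓ) :
    ∫ x in 0..T, (∫ s in 0..ℓ, g (x + s)) ^ 2 ≤ ℓ ^ 2 * ∫ x in 0..T, g x ^ 2 := by
  have hg2 : Continuous fun x => g x ^ 2 := by fun_prop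
  calc ∫ x in 0..T, (∫ s in 0..ℓ, g (x + s)) ^ 2
      ≤ ∫ x in 0..T, ℓ * ∫ s in 0..ℓ, g (x + s) ^ 2 := by
        refine intervalIntegral.integral_mono_on hT
          (((continuous_integral_comp_add hg ℓ).pow 2).intervalIntegrable _ _)
          ((continuous_const.mul (continuous_integral_comp_add hg2 ℓ)).intervalIntegrable _ _)
          fun x _ => ?_
        simpa only [sub_zero] using sq_integral_le_mul_integral_sq (g := fun s => g (x + s)) hℓ
          (Continuous.intervalIntegrable (by fun_prop) _ _)
          (Continuous.intervalIntegrable (by fun_prop) _ _)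
    _ = ℓ ^ 2 * ∫ x in 0..T, g x ^ 2 := by
        rw [intervalIntegral.integral_const_mul,
          integral_integral_comp_add_of_periodic hg2 (hgT.comp (· ^ 2))]
        ring

theorem sub_eq_integral_deriv_comp_add (hv : ContDiff ℝ 1 v) (x ℓ : ℝ) :
    v (x + ℓ) - v x = ∫ s in 0..ℓ, deriv v (x + s) := by
  rw [intervalIntegral.integral_comp_add_left, add_zero,
    intervalIntegral.integral_deriv_eq_sub (fun y _ => hv.differentiable_one y)
      ((hv.continuous_deriv_one).intervalIntegrable _ _)]

theorem integral_sq_sub_le_of_periodic (hv : ContDiff ℝ 1 v) (hvT : Periodic v T) (hT : 0 ≤ T)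
    (hℓ : 0 ≤ ℓ) :
    ∫ x in 0..T, (v (x + ℓ) - v x) ^ 2 ≤ ℓ ^ 2 * ∫ x in 0..T, deriv v x ^ 2 := by
  simp only [sub_eq_integral_deriv_comp_add hv]
  exact integral_sq_integral_comp_add_le hv.continuous_deriv_one (periodic_deriv hvT) hT hℓ

theorem integral_abs_cube_sub_le_of_periodic (hv : ContDiff ℝ 1 v) (hvT : Periodic v T)
    (hT : 0 ≤ T) (hℓ : 0 ≤ ℓ) {b : ℝ} (hb : ∀ x, |deriv v x| ≤ b) :
    ∫ x in 0..T, |v (x + ℓ) - v x| ^ 3 ≤ ℓ ^ 3 * b * ∫ x in 0..T, deriv v x ^ 2 := by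
  have hvc := hv.continuous
  have hlip : ∀ x, |v (x + ℓ) - v x| ≤ ℓ * b := fun x => by
    have h := Convex.norm_image_sub_le_of_norm_deriv_le (s := univ) (x := x) (y := x + ℓ)
      (fun y _ => hv.differentiable_one y) (fun y _ => hb y) convex_univ trivial trivial
    rwa [add_sub_cancel_left, Real.norm_eq_abs, Real.norm_of_nonneg hℓ, mul_comm] at h
  have hb0 : 0 ≤ b := (abs_nonneg _).trans (hb 0)
  calc ∫ x in 0..T, |v (x + ℓ) - v x| ^ 3
      ≤ ∫ x in 0..T, ℓ * b * (v (x + ℓ) - v x) ^ 2 := by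
        refine intervalIntegral.integral_mono_on hT
          (Continuous.intervalIntegrable (by fun_prop) _ _)
          (Continuous.intervalIntegrable (by fun_prop) _ _) fun x _ => ?_
        rw [← sq_abs (v (x + ℓ) - v x), pow_succ' _ 2]
        exact mul_le_mul_of_nonneg_right (hlip x) (by positivity)
    _ ≤ ℓ * b * (ℓ ^ 2 * ∫ x in 0..T, deriv v x ^ 2) := by
        rw [intervalIntegral.integral_const_mul]
        gcongr
        exact integral_sq_sub_le_of_periodic hv hvT hT hℓ
    _ = ℓ ^ 3 * b * ∫ x in 0..T, deriv v x ^ 2 := by ring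

theorem abs_sub_sub_mul_deriv_le (hv : ContDiff ℝ 2 v) (hℓ : 0 ≤ ℓ) (x : ℝ) :
    |v (x + ℓ) - v x - ℓ * deriv v x| ≤ ℓ * ∫ s in 0..ℓ, |deriv (deriv v) (x + s)| := by
  have hv1 : ContDiff ℝ 1 v := hv.of_le one_le_two
  have hdv : ContDiff ℝ 1 (deriv v) := (contDiff_succ_iff_deriv.1 hv).2.2
  have : Continuous (deriv v) := hdv.continuous
  have : Continuous (deriv (deriv v)) := hdv.continuous_deriv_one
  have hdiff : v (x + ℓ) - v x - ℓ * deriv v x = ∫ s in 0..ℓ, (deriv v (x + s) - deriv v x) := by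
    rw [sub_eq_integral_deriv_comp_add hv1, intervalIntegral.integral_sub
      (Continuous.intervalIntegrable (by fun_prop) _ _) intervalIntegrable_const,
      intervalIntegral.integral_const, sub_zero, smul_eq_mul]
  have hbound : ∀ s ∈ Ioc 0 ℓ,
      ‖deriv v (x + s) - deriv v x‖ ≤ ∫ r in 0..ℓ, |deriv (deriv v) (x + r)| := fun s hs => by
    rw [sub_eq_integral_deriv_comp_add hdv]
    refine (intervalIntegral.abs_integral_le_integral_abs hs.1.le).trans ?_
    exact intervalIntegral.integral_mono_interval le_rfl hs.1.le hs.2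
      (Eventually.of_forall fun r => abs_nonneg _) (Continuous.intervalIntegrable (by fun_prop) _ _)
  have h := intervalIntegral.norm_integral_le_of_norm_le_const (by rwa [uIoc_of_le hℓ])
  rwa [← hdiff, Real.norm_eq_abs, sub_zero, abs_of_nonneg hℓ, mul_comm _ ℓ] at h

theorem le_integral_sq_sub_of_periodic (hv : ContDiff ℝ 2 v) (hvT : Periodic v T) (hT : 0 ≤ T)
    (hℓ : 0 ≤ ℓ) :
    ℓ ^ 2 / 2 * (∫ x in 0..T, deriv v x ^ 2) - ℓ ^ 4 * ∫ x in 0..T, deriv (deriv v) x ^ 2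
      ≤ ∫ x in 0..T, (v (x + ℓ) - v x) ^ 2 := by
  have hvc := hv.continuous
  have hdv : ContDiff ℝ 1 (deriv v) := (contDiff_succ_iff_deriv.1 hv).2.2
  have hdvc := hdv.continuous
  have hddv := hdv.continuous_deriv_one.abs
  have hddvT := periodic_deriv (periodic_deriv hvT)
  set m : ℝ → ℝ := fun x => ∫ s in 0..ℓ, |deriv (deriv v) (x + s)|
  have hm : Continuous m := continuous_integral_comp_add hddv ℓ
  have hpoint : ∀ x, ℓ ^ 2 / 2 * deriv v x ^ 2 ≤ (v (x + ℓ) - v x) ^ 2 + ℓ ^ 2 * m x ^ 2 :=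
    fun x => by
      have h := sq_le_sq' (neg_le_of_abs_le (abs_sub_sub_mul_deriv_le hv hℓ x))
        (le_of_abs_le (abs_sub_sub_mul_deriv_le hv hℓ x))
      nlinarith [sq_nonneg (v (x + ℓ) - v x + (v (x + ℓ) - v x - ℓ * deriv v x))]
  have hint := intervalIntegral.integral_mono_on (μ := volume) hT
    (Continuous.intervalIntegrable (by fun_prop) _ _)
    (Continuous.intervalIntegrable (by fun_prop) _ _) fun x _ => hpoint x
  rw [intervalIntegral.integral_const_mul,
    intervalIntegral.integral_add (Continuous.intervalIntegrable (by fun_prop) _ _)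
      (Continuous.intervalIntegrable (by fun_prop) _ _),
    intervalIntegral.integral_const_mul] at hint
  have hwindow : ∫ x in 0..T, m x ^ 2 ≤ ℓ ^ 2 * ∫ x in 0..T, deriv (deriv v) x ^ 2 := by
    simpa only [sq_abs] using integral_sq_integral_comp_add_le hddv (hddvT.comp (|·|)) hT hℓ
  nlinarith [mul_le_mul_of_nonneg_left hwindow (sq_nonneg ℓ)]

theorem sq_le_of_periodic_of_eq_zero (hg : ContDiff ℝ 1 g) (hgT : Periodic g T) (hT : 0 < T)
    {z₀ ε : ℝ} (hz₀ : g z₀ = 0) (hε : 0 < ε) (x : ℝ) :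
    g x ^ 2 ≤ ε⁻¹ * (∫ y in 0..T, g y ^ 2) + ε * ∫ y in 0..T, deriv g y ^ 2 := by
  have hgc := hg.continuous
  have : Continuous (deriv g) := hg.continuous_deriv_one
  obtain ⟨z, ⟨hzx, hxz⟩, hz⟩ := hgT.exists_mem_Ico hT z₀ (x - T)
  rw [sub_add_cancel] at hxz
  set e : ℝ → ℝ := fun y => ε⁻¹ * g y ^ 2 + ε * deriv g y ^ 2
  have he : Continuous e := by fun_prop
  have he0 : ∀ y, 0 ≤ e y := fun y => by positivity
  have heT : Periodic e T := fun y => by simp only [e, hgT y, periodic_deriv hgT y]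
  have hamgm : ∀ y, 2 * g y * deriv g y ≤ e y := fun y => by
    have : e y - 2 * g y * deriv g y = ε⁻¹ * (g y - ε * deriv g y) ^ 2 := by
      simp only [e]; field_simp; ring
    nlinarith [mul_nonneg (inv_pos.2 hε).le (sq_nonneg (g y - ε * deriv g y))]
  calc g x ^ 2 = ∫ y in z..x, 2 * g y * deriv g y := by
        rw [intervalIntegral.integral_eq_sub_of_hasDerivAt (f := fun y => g y ^ 2)
          (fun y _ => by simpa using (hg.differentiable_one y).hasDerivAt.fun_pow 2)
          (Continuous.intervalIntegrable (by fun_prop) _ _), ← hz, hz₀]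
        ring
    _ ≤ ∫ y in z..x, e y := intervalIntegral.integral_mono_on hxz.le
        (Continuous.intervalIntegrable (by fun_prop) _ _) (he.intervalIntegrable _ _)
        fun y _ => hamgm y
    _ ≤ ∫ y in (x - T)..(x - T) + T, e y := by
        rw [sub_add_cancel]
        exact intervalIntegral.integral_mono_interval hzx hxz.le le_rfl
          (Eventually.of_forall he0) (he.intervalIntegrable _ _)
    _ = ∫ y in 0..T, e y := by rw [heT.intervalIntegral_add_eq (x - T) 0, zero_add]
    _ = _ := by
        rw [intervalIntegral.integral_add (Continuous.intervalIntegrable (by fun_prop) _ _)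
          (Continuous.intervalIntegrable (by fun_prop) _ _), intervalIntegral.integral_const_mul,
          intervalIntegral.integral_const_mul]

theorem abs_deriv_le_of_periodic (hv : ContDiff ℝ 2 v) (hvT : Periodic v T) (hT : 0 < T)
    {ε : ℝ} (hε : 0 < ε) (x : ℝ) :
    |deriv v x| ≤ (ε⁻¹ + (∫ y in 0..T, deriv v y ^ 2)
      + ε ^ 2 * ∫ y in 0..T, deriv (deriv v) y ^ 2) / 2 := by
  obtain ⟨z, -, hz⟩ := exists_deriv_eq_zero hT hv.continuous.continuousOn
    (by simpa using (hvT 0).symm)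
  have hsq := sq_le_of_periodic_of_eq_zero (contDiff_succ_iff_deriv.1 hv).2.2
    (periodic_deriv hvT) hT hz hε x
  have hamgm : 2 * |deriv v x| ≤ ε⁻¹ + ε * deriv v x ^ 2 := by
    have : ε⁻¹ + ε * deriv v x ^ 2 - 2 * |deriv v x| = ε⁻¹ * (1 - ε * |deriv v x|) ^ 2 := by
      rw [← sq_abs]; field_simp; ring
    nlinarith [mul_nonneg (inv_pos.2 hε).le (sq_nonneg (1 - ε * |deriv v x|))]
  have hmul := mul_le_mul_of_nonneg_left hsq hε.le
  rw [mul_add, mul_inv_cancel_left₀ hε.ne', ← mul_assoc, ← sq] at hmul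
  linarith

theorem abs_le_of_periodic_of_deriv_le (hv : Differentiable ℝ v) (hvT : Periodic v T) (hT : 0 < T)
    (hmean : ∫ x in 0..T, v x = 0) {G : ℝ} (hG : ∀ x, deriv v x ≤ G) (x : ℝ) :
    |v x| ≤ G * T := by
  obtain ⟨z₀, -, hz₀⟩ := exists_eq_interval_average hT.ne hv.continuous.continuousOn
  rw [interval_average_eq, hmean, smul_zero] at hz₀
  have hG0 : 0 ≤ G := by
    have := image_sub_le_mul_sub_of_deriv_le hv hG hT.le
    rw [← zero_add T, hvT 0, sub_self, zero_add, sub_zero] at this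
    exact nonneg_of_mul_nonneg_left this hT
  obtain ⟨z, hz, hvz⟩ := hvT.exists_mem_Ico hT z₀ x
  obtain ⟨y, hy, hvy⟩ := hvT.exists_mem_Ico hT z₀ (x - T)
  have hright := image_sub_le_mul_sub_of_deriv_le hv hG hz.1
  have hleft := image_sub_le_mul_sub_of_deriv_le hv hG (show y ≤ x by linarith [hy.2])
  rw [← hvz, hz₀] at hright
  rw [← hvy, hz₀] at hleft
  rw [abs_le]
  constructor <;> nlinarith [hz.2, hy.1]

theorem integral_sub_eq_zero_of_periodic (hv : Continuous v) (hvT : Periodic v T) (ℓ : ℝ) :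
    ∫ x in 0..T, (v (x + ℓ) - v x) = 0 := by
  rw [intervalIntegral.integral_sub (Continuous.intervalIntegrable (by fun_prop) _ _)
    (hv.intervalIntegrable _ _), integral_comp_add_right_of_periodic hvT, sub_self]

theorem integral_mul_deriv_of_periodic (hg : ContDiff ℝ 1 g) (hw : ContDiff ℝ 1 w)
    (hgT : Periodic g T) (hwT : Periodic w T) :
    ∫ x in 0..T, g x * deriv w x = -∫ x in 0..T, deriv g x * w x := by
  rw [intervalIntegral.integral_mul_deriv_eq_deriv_mul
    (fun x _ => (hg.differentiable_one x).hasDerivAt)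
    (fun x _ => (hw.differentiable_one x).hasDerivAt)
    (hg.continuous_deriv_one.intervalIntegrable _ _)
    (hw.continuous_deriv_one.intervalIntegrable _ _), ← zero_add T, hgT 0, hwT 0, sub_self,
    zero_sub]

theorem integral_comp_mul_deriv_of_periodic (hg : Continuous g) (hv : ContDiff ℝ 1 v)
    (hvT : Periodic v T) : ∫ x in 0..T, g (v x) * deriv v x = 0 := by
  have h := intervalIntegral.integral_comp_mul_deriv (a := 0) (b := T)
    (fun x _ => (hv.differentiable_one x).hasDerivAt) hv.continuous_deriv_one.continuousOn hg
  rwa [← zero_add T, hvT 0, intervalIntegral.integral_same, zero_add] at h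

end Periodic

theorem deriv_deriv_nonpos_of_isLocalMax {v : ℝ → ℝ} {x : ℝ} (hx : ContinuousAt v x)
    (hmax : IsLocalMax v x) : deriv (deriv v) x ≤ 0 := by
  by_contra! hpos
  have hmin := isLocalMin_of_deriv_deriv_pos hpos hmax.deriv_eq_zero hx
  have hconst : v =ᶠ[𝓝 x] fun _ => v x := by
    filter_upwards [hmax, hmin] with y hy hy' using le_antisymm hy hy'
  have hderiv : deriv v =ᶠ[𝓝 x] fun _ => 0 := by simpa only [deriv_const'] using hconst.deriv
  rw [hderiv.deriv_eq, deriv_const] at hpos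
  exact hpos.false

theorem hasDerivAt_nonneg_of_eventually_le_left {φ : ℝ → ℝ} {φ' t : ℝ} (hφ : HasDerivAt φ φ' t)
    (hle : ∀ᶠ s in 𝓝[<] t, φ s ≤ φ t) : 0 ≤ φ' := by
  have hslope : Tendsto (slope φ t) (𝓝[<] t) (𝓝 φ') :=
    (hasDerivAt_iff_tendsto_slope.1 hφ).mono_left (nhdsWithin_mono t fun s hs => ne_of_lt hs)
  refine ge_of_tendsto hslope ?_
  filter_upwards [hle, self_mem_nhdsWithin] with s hs hst
  rw [slope_def_field]
  exact div_nonneg_of_nonpos (sub_nonpos.2 hs) (sub_nonpos.2 (le_of_lt hst))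

theorem exists_forall_le_of_periodic {F : ℝ → ℝ → ℝ} {K : Set ℝ} {T : ℝ} (hK : IsCompact K)
    (hKne : K.Nonempty) (hT : 0 < T) (hF : ContinuousOn (uncurry F) (K ×ˢ univ))
    (hFT : ∀ t ∈ K, Periodic (F t) T) :
    ∃ t₀ ∈ K, ∃ x₀, ∀ t ∈ K, ∀ x, F t x ≤ F t₀ x₀ := by
  obtain ⟨⟨t₀, x₀⟩, ⟨ht₀, -⟩, hmax⟩ := (hK.prod isCompact_Icc).exists_isMaxOn
    (hKne.prod (nonempty_Icc.2 hT.le)) (hF.mono (prod_mono_right (subset_univ _)))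
  refine ⟨t₀, ht₀, x₀, fun t ht x => ?_⟩
  obtain ⟨y, hy, hxy⟩ := (hFT t ht).exists_mem_Ico₀ hT x
  rw [hxy]
  exact hmax (show (t, y) ∈ K ×ˢ Icc 0 T from ⟨ht, Ico_subset_Icc_self hy⟩)

section Parametric

variable {F F' : ℝ → ℝ → ℝ} {U : Set ℝ} {a b t x : ℝ}

theorem continuousOn_intervalIntegral_param (hF : ContinuousOn (uncurry F) (U ×ˢ univ)) (a b : ℝ) :
    ContinuousOn (fun t => ∫ x in a..b, F t x) U := by
  rw [continuousOn_iff_continuous_domRestrict]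
  exact intervalIntegral.continuous_parametric_intervalIntegral_of_continuous'
    (f := fun (t : U) x => F t x)
    (hF.comp_continuous (f := fun z : U × ℝ => ((z.1 : ℝ), z.2)) (by fun_prop)
      fun z => ⟨z.1.2, mem_univ _⟩) a b

theorem hasDerivAt_intervalIntegral_param (hU : U ∈ 𝓝 t)
    (hF : ∀ s ∈ U, ContinuousOn (F s) (uIcc a b))
    (hF' : ContinuousOn (uncurry F') (U ×ˢ uIcc a b))
    (hderiv : ∀ s ∈ U, ∀ x ∈ uIcc a b, HasDerivAt (fun r => F r x) (F' s x) s) :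
    HasDerivAt (fun s => ∫ x in a..b, F s x) (∫ x in a..b, F' t x) t := by
  obtain ⟨r, hr, hrU⟩ := Metric.nhds_basis_closedBall.mem_iff.1 hU
  obtain ⟨C, hC⟩ := ((isCompact_closedBall t r).prod isCompact_uIcc).exists_bound_of_continuousOn
    (hF'.mono (prod_mono_left hrU))
  have hslice : ContinuousOn (F' t) (uIcc a b) :=
    hF'.comp (f := fun x => (t, x)) (by fun_prop) fun x hx => ⟨mem_of_mem_nhds hU, hx⟩
  exact (intervalIntegral.hasDerivAt_integral_of_dominated_loc_of_deriv_le
    (bound := fun _ => C) (Metric.closedBall_mem_nhds t hr)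
    (by filter_upwards [hU] with s hs using (hF s hs).intervalIntegrable.def'.aestronglyMeasurable)
    (hF t (mem_of_mem_nhds hU)).intervalIntegrable
    hslice.intervalIntegrable.def'.aestronglyMeasurable
    (Eventually.of_forall fun x hx s hs => hC (s, x) ⟨hs, uIoc_subset_uIcc hx⟩)
    intervalIntegrable_const
    (Eventually.of_forall fun x hx s hs => hderiv s (hrU hs) x (uIoc_subset_uIcc hx))).2

theorem hasDerivAt_uncurry_left (hF : DifferentiableAt ℝ (uncurry F) (t, x)) :
    HasDerivAt (fun s => F s x) (fderiv ℝ (uncurry F) (t, x) (1, 0)) t :=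
  HasFDerivAt.comp_hasDerivAt (l := uncurry F) (f := fun s => (s, x)) t hF.hasFDerivAt
    ((hasDerivAt_id t).prodMk (hasDerivAt_const t x))

theorem hasDerivAt_uncurry_right (hF : DifferentiableAt ℝ (uncurry F) (t, x)) :
    HasDerivAt (F t) (fderiv ℝ (uncurry F) (t, x) (0, 1)) x :=
  HasFDerivAt.comp_hasDerivAt (l := uncurry F) (f := fun y => (t, y)) x hF.hasFDerivAt
    ((hasDerivAt_const x t).prodMk (hasDerivAt_id x))

theorem hasDerivAt_deriv_of_contDiffAt_uncurry (hF : ContDiffAt ℝ 2 (uncurry F) (t, x)) :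
    HasDerivAt (fun s => deriv (F s) x) (deriv (fun y => deriv (fun s => F s y) t) x) t := by
  set F₂ := fderiv ℝ (fderiv ℝ (uncurry F)) (t, x)
  have hdiff : ∀ᶠ z in 𝓝 (t, x), DifferentiableAt ℝ (uncurry F) z :=
    (hF.eventually (by simp)).mono fun z hz => hz.differentiableAt two_ne_zero
  have hsymm : IsSymmSndFDerivAt ℝ (uncurry F) (t, x) :=
    hF.isSymmSndFDerivAt minSmoothness_of_isRCLikeNormedField.le
  have hsnd : HasFDerivAt (fderiv ℝ (uncurry F)) F₂ (t, x) :=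
    ((hF.fderiv_right (m := 1) one_add_one_eq_two.le).differentiableAt one_ne_zero).hasFDerivAt
  have happly : ∀ e : ℝ × ℝ, HasFDerivAt (fun z => fderiv ℝ (uncurry F) z e) (F₂.flip e) (t, x) :=
    fun e => ((ContinuousLinearMap.apply ℝ ℝ e).hasFDerivAt).comp (t, x) hsnd
  have htime : HasDerivAt (fun s => (s, x)) ((1 : ℝ), (0 : ℝ)) t :=
    (hasDerivAt_id t).prodMk (hasDerivAt_const t x)
  have hspace : HasDerivAt (fun y => (t, y)) ((0 : ℝ), (1 : ℝ)) x :=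
    (hasDerivAt_const x t).prodMk (hasDerivAt_id x)
  have htx : HasDerivAt (fun s => deriv (F s) x) (F₂ (1, 0) (0, 1)) t := by
    refine (HasFDerivAt.comp_hasDerivAt t (happly (0, 1)) htime).congr_of_eventuallyEq ?_
    filter_upwards [htime.continuousAt.eventually hdiff] with s hs
      using (hasDerivAt_uncurry_right hs).deriv
  have hxt : HasDerivAt (fun y => deriv (fun s => F s y) t) (F₂ (0, 1) (1, 0)) x := by
    refine (HasFDerivAt.comp_hasDerivAt x (happly (1, 0)) hspace).congr_of_eventuallyEq ?_
    filter_upwards [hspace.continuousAt.eventually hdiff] with y hy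
      using (hasDerivAt_uncurry_left hy).deriv
  rwa [hxt.deriv, hsymm.eq (0, 1) (1, 0)]

end Parametric

/-- `u t x` is smooth jointly in the time `t ≥ 0` and the space variable `x`, one-sidedly at
`t = 0`. -/
def SmoothEvolution (u : ℝ → ℝ → ℝ) : Prop :=
  ContDiffOn ℝ ∞ (uncurry u) (Ici 0 ×ˢ univ)

namespace SmoothEvolution

variable {u w : ℝ → ℝ → ℝ} {t : ℝ}

theorem continuousOn (hu : SmoothEvolution u) : ContinuousOn (uncurry u) (Ici 0 ×ˢ univ) :=
  ContDiffOn.continuousOn hu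

theorem contDiff (hu : SmoothEvolution u) (ht : 0 ≤ t) : ContDiff ℝ ∞ (u t) :=
  contDiffOn_univ.1 <| ContDiffOn.comp (g := uncurry u) hu
    (by fun_prop : ContDiffOn ℝ ∞ (fun x => (t, x)) univ) fun _ _ => ⟨ht, mem_univ _⟩

theorem contDiff_one (hu : SmoothEvolution u) (ht : 0 ≤ t) : ContDiff ℝ 1 (u t) :=
  (hu.contDiff ht).of_le (mod_cast le_top)

theorem contDiff_two (hu : SmoothEvolution u) (ht : 0 ≤ t) : ContDiff ℝ 2 (u t) :=
  (hu.contDiff ht).of_le (WithTop.coe_le_coe.2 le_top)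

theorem contDiffAt (hu : SmoothEvolution u) (ht : 0 < t) (x : ℝ) :
    ContDiffAt ℝ ∞ (uncurry u) (t, x) :=
  ContDiffOn.contDiffAt hu (prod_mem_nhds (Ici_mem_nhds ht) univ_mem)

protected theorem deriv (hu : SmoothEvolution u) : SmoothEvolution fun t => deriv (u t) := by
  have hsnd : ContDiffOn ℝ ∞
      (fun z => fderivWithin ℝ (uncurry u) (Ici 0 ×ˢ univ) z (0, 1)) (Ici 0 ×ˢ univ) :=
    (ContDiffOn.fderivWithin hu ((uniqueDiffOn_Ici 0).prod uniqueDiffOn_univ)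
      (by simp)).clm_apply contDiffOn_const
  refine hsnd.congr fun ⟨t, x⟩ htx => ?_
  exact (((ContDiffOn.differentiableOn hu (by simp) (t, x) htx).hasFDerivWithinAt).comp_hasDerivAt x
    ((hasDerivAt_const x t).prodMk (hasDerivAt_id x))
    (Eventually.of_forall fun y => ⟨htx.1, mem_univ _⟩)).deriv

theorem hasDerivAt_integral_sq (hu : SmoothEvolution u) (hw : SmoothEvolution w)
    (huw : ∀ s, 0 < s → ∀ x, HasDerivAt (fun r => u r x) (w s x) s) (ht : 0 < t) (a b : ℝ) :
    HasDerivAt (fun s => ∫ x in a..b, u s x ^ 2) (∫ x in a..b, 2 * (u t x * w t x)) t := by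
  refine hasDerivAt_intervalIntegral_param (F' := fun t x => 2 * (u t x * w t x)) (Ioi_mem_nhds ht)
    (fun s hs => ((hu.contDiff (le_of_lt hs)).continuous.pow 2).continuousOn) ?_ fun s hs x _ => ?_
  · exact (continuousOn_const.mul (hu.continuousOn.mul hw.continuousOn)).mono
      (prod_mono Ioi_subset_Ici_self (subset_univ _))
  · simpa [mul_assoc] using (huw s hs x).fun_pow 2

theorem continuousOn_integral_sq (hu : SmoothEvolution u) (a b : ℝ) :
    ContinuousOn (fun t => ∫ x in a..b, u t x ^ 2) (Ici 0) :=
  continuousOn_intervalIntegral_param (F := fun t x => u t x ^ 2)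
    ((hu.continuousOn.pow 2).congr fun _ _ => rfl) a b

end SmoothEvolution

theorem sobLp_zero_one {v : ℝ → ℝ} (hv : Continuous v) : sobLp 0 1 v = ∫ x in 0..1, |v x| := by
  rw [sobLp, iteratedDeriv_zero, toReal_eLpNorm hv.aestronglyMeasurable,
    lpNorm_one_eq_integral_norm hv.aestronglyMeasurable,
    intervalIntegral.integral_of_le zero_le_one]
  rfl

theorem sobLp_one_two_sq {v : ℝ → ℝ} (hv : Continuous (deriv v)) :
    sobLp 1 2 v ^ 2 = ∫ x in 0..1, deriv v x ^ 2 := by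
  have hnonneg : 0 ≤ ∫ x in Ioc (0 : ℝ) 1, deriv v x ^ 2 := integral_nonneg fun x => sq_nonneg _
  rw [sobLp, iteratedDeriv_one, toReal_eLpNorm hv.aestronglyMeasurable,
    lpNorm_eq_integral_norm_rpow_toReal two_ne_zero ENNReal.ofNat_ne_top hv.aestronglyMeasurable,
    intervalIntegral.integral_of_le zero_le_one]
  simp only [ENNReal.toReal_ofNat, Real.rpow_two, Real.norm_eq_abs, sq_abs]
  rw [← Real.rpow_mul_natCast hnonneg]
  norm_num

theorem abs_deriv_le_sobLp_one_top {v : ℝ → ℝ} (hv : Continuous (deriv v)) (hper : Periodic v 1)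
    (x : ℝ) : |deriv v x| ≤ sobLp 1 ⊤ v := by
  obtain ⟨C, hC⟩ :=
    isCompact_Icc.exists_bound_of_continuousOn (hv.continuousOn (s := Icc (0 : ℝ) 1))
  have hmem : MemLp (deriv v) ⊤ (volume.restrict (Ioc (0 : ℝ) 1)) := by
    refine memLp_top_of_bound hv.aestronglyMeasurable C ?_
    filter_upwards [ae_restrict_mem measurableSet_Ioc] with x hx using hC x (Ioc_subset_Icc_self hx)
  have hae : ∀ᵐ x ∂volume.restrict (Ioc (0 : ℝ) 1), |deriv v x| ≤ sobLp 1 ⊤ v := by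
    simpa only [sobLp, iteratedDeriv_one, toReal_eLpNorm hv.aestronglyMeasurable,
      Real.norm_eq_abs] using ae_le_lpNorm_exponent_top hmem
  have hIoc : EqOn (fun x => max |deriv v x| (sobLp 1 ⊤ v)) (fun _ => sobLp 1 ⊤ v) (Ioc 0 1) :=
    Measure.eqOn_Ioc_of_ae_eq volume (hae.mono fun x hx => max_eq_right hx) (by fun_prop)
      (by fun_prop)
  obtain ⟨y, hy, hxy⟩ := (periodic_deriv hper).exists_mem_Ioc zero_lt_one x 0
  rw [hxy]
  exact max_eq_right_iff.1 (hIoc (by rwa [zero_add] at hy))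

theorem hasDerivAt_riccati {σ D t : ℝ} (ht : 1 + σ * D * t ≠ 0) :
    HasDerivAt (fun s => D / (1 + σ * D * s)) (-(σ * (D / (1 + σ * D * t)) ^ 2)) t := by
  have hden : HasDerivAt (fun s => 1 + σ * D * s) (σ * D) t := by
    simpa using ((hasDerivAt_id t).const_mul (σ * D)).const_add 1
  refine ((hasDerivAt_const t D).fun_div hden ht).congr_deriv ?_
  rw [div_pow]
  ring

/-- The value that the equation `u_t + f'(u) u_x - ν u_xx = 0` prescribes for `u_t`. -/
noncomputable def burgersRHS (f : ℝ → ℝ) (ν : ℝ) (u : ℝ → ℝ → ℝ) (t x : ℝ) : ℝ :=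
  ν * deriv (deriv (u t)) x - deriv f (u t x) * deriv (u t) x

namespace IsBurgersSolution

variable {f : ℝ → ℝ} {σ ν : ℝ} {u : ℝ → ℝ → ℝ} {t x D : ℝ}

theorem smoothEvolution (h : IsBurgersSolution f σ ν u) : SmoothEvolution u := h.hu

theorem periodic (h : IsBurgersSolution f σ ν u) (t : ℝ) : Periodic (u t) 1 := h.hper t

theorem contDiff_deriv_flux (h : IsBurgersSolution f σ ν u) : ContDiff ℝ ∞ (deriv f) :=
  (contDiff_infty_iff_deriv.1 h.hf).2

theorem le_deriv_deriv_flux (h : IsBurgersSolution f σ ν u) (y : ℝ) : σ ≤ deriv (deriv f) y := by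
  simpa only [iteratedDeriv_succ, iteratedDeriv_zero] using h.hconv y

theorem integral_eq_zero (h : IsBurgersSolution f σ ν u) (ht : 0 ≤ t) : ∫ x in 0..1, u t x = 0 := by
  rw [intervalIntegral.integral_of_le zero_le_one, h.hmean t ht]

theorem smoothEvolution_burgersRHS (h : IsBurgersSolution f σ ν u) :
    SmoothEvolution (burgersRHS f ν u) := by
  have hflux : ContDiffOn ℝ ∞ (uncurry fun t x => deriv f (u t x)) (Ici 0 ×ˢ univ) :=
    h.contDiff_deriv_flux.comp_contDiffOn h.smoothEvolution
  exact (contDiffOn_const.mul h.smoothEvolution.deriv.deriv).sub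
    (hflux.mul h.smoothEvolution.deriv)

theorem periodic_burgersRHS (h : IsBurgersSolution f σ ν u) (t : ℝ) :
    Periodic (burgersRHS f ν u t) 1 := fun x => by
  have hu := h.periodic t
  simp only [burgersRHS, hu x, periodic_deriv hu x, periodic_deriv (periodic_deriv hu) x]

theorem deriv_time (h : IsBurgersSolution f σ ν u) (ht : 0 < t) (x : ℝ) :
    deriv (fun s => u s x) t = burgersRHS f ν u t x := by
  unfold burgersRHS
  linarith [h.hpde t ht x]

theorem hasDerivAt_time (h : IsBurgersSolution f σ ν u) (ht : 0 < t) (x : ℝ) :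
    HasDerivAt (fun s => u s x) (burgersRHS f ν u t x) t := by
  rw [← h.deriv_time ht x]
  exact (hasDerivAt_uncurry_left
    ((h.smoothEvolution.contDiffAt ht x).differentiableAt (by simp))).differentiableAt.hasDerivAt

theorem hasDerivAt_deriv_time (h : IsBurgersSolution f σ ν u) (ht : 0 < t) (x : ℝ) :
    HasDerivAt (fun s => deriv (u s) x) (deriv (burgersRHS f ν u t) x) t := by
  have hswap := hasDerivAt_deriv_of_contDiffAt_uncurry
    ((h.smoothEvolution.contDiffAt ht x).of_le (WithTop.coe_le_coe.2 le_top))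
  rwa [funext (h.deriv_time ht)] at hswap

theorem hasDerivAt_integral_sq (h : IsBurgersSolution f σ ν u) (ht : 0 < t) :
    HasDerivAt (fun s => ∫ x in 0..1, u s x ^ 2) (-(2 * ν * ∫ x in 0..1, deriv (u t) x ^ 2)) t := by
  have hu := h.smoothEvolution
  have hf := h.contDiff_deriv_flux.continuous
  have h0 := (hu.contDiff ht.le).continuous
  have h1 := (hu.deriv.contDiff ht.le).continuous
  have h2 := (hu.deriv.deriv.contDiff ht.le).continuous
  refine (hu.hasDerivAt_integral_sq h.smoothEvolution_burgersRHS
    (fun s hs x => h.hasDerivAt_time hs x) ht 0 1).congr_deriv ?_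
  have hdissipation := integral_mul_deriv_of_periodic (hu.contDiff_one ht.le)
    (hu.deriv.contDiff_one ht.le) (h.periodic t) (periodic_deriv (h.periodic t))
  have htransport := integral_comp_mul_deriv_of_periodic (g := fun y => y * deriv f y)
    (by fun_prop) (hu.contDiff_one ht.le) (h.periodic t)
  calc ∫ x in 0..1, 2 * (u t x * burgersRHS f ν u t x)
      = ∫ x in 0..1, (2 * ν * (u t x * deriv (deriv (u t)) x)
          - 2 * (u t x * deriv f (u t x) * deriv (u t) x)) := by
        congr 1 with x
        unfold burgersRHS
        ring
    _ = -(2 * ν * ∫ x in 0..1, deriv (u t) x ^ 2) := by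
        rw [intervalIntegral.integral_sub (Continuous.intervalIntegrable (by fun_prop) _ _)
          (Continuous.intervalIntegrable (by fun_prop) _ _), intervalIntegral.integral_const_mul,
          intervalIntegral.integral_const_mul, hdissipation, htransport]
        simp only [← sq]
        ring

theorem hasDerivAt_integral_sq_deriv (h : IsBurgersSolution f σ ν u) (ht : 0 < t) :
    HasDerivAt (fun s => ∫ x in 0..1, deriv (u s) x ^ 2)
      (-(2 * ∫ x in 0..1, deriv (deriv (u t)) x * burgersRHS f ν u t x)) t := by
  refine (h.smoothEvolution.deriv.hasDerivAt_integral_sq h.smoothEvolution_burgersRHS.deriv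
    (fun s hs x => h.hasDerivAt_deriv_time hs x) ht 0 1).congr_deriv ?_
  rw [intervalIntegral.integral_const_mul, integral_mul_deriv_of_periodic
    (h.smoothEvolution.deriv.contDiff_one ht.le) (h.smoothEvolution_burgersRHS.contDiff_one ht.le)
    (periodic_deriv (h.periodic t)) (h.periodic_burgersRHS t), mul_neg]

theorem deriv_burgersRHS_le_of_isLocalMax (h : IsBurgersSolution f σ ν u) (ht : 0 ≤ t)
    (hmax : IsLocalMax (deriv (u t)) x) :
    deriv (burgersRHS f ν u t) x ≤ -(σ * deriv (u t) x ^ 2) := by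
  have hu := h.smoothEvolution
  have hsnd : deriv (deriv (u t)) x = 0 := hmax.deriv_eq_zero
  have hthird : deriv (deriv (deriv (u t))) x ≤ 0 :=
    deriv_deriv_nonpos_of_isLocalMax (hu.deriv.contDiff ht).continuous.continuousAt hmax
  have hflux : HasDerivAt (fun y => deriv f (u t y)) (deriv (deriv f) (u t x) * deriv (u t) x) x :=
    HasDerivAt.comp x (h.contDiff_deriv_flux.differentiable (by simp) (u t x)).hasDerivAt
      ((hu.contDiff_one ht).differentiable_one x).hasDerivAt
  have hrhs : deriv (burgersRHS f ν u t) x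
      = ν * deriv (deriv (deriv (u t))) x - deriv (deriv f) (u t x) * deriv (u t) x ^ 2 := by
    have hdiffusion := ((hu.deriv.deriv.contDiff_one ht).differentiable_one x).hasDerivAt
    have htransport :=
      hflux.fun_mul ((hu.deriv.contDiff_one ht).differentiable_one x).hasDerivAt
    rw [hsnd] at htransport
    exact ((hdiffusion.const_mul ν).fun_sub htransport).deriv.trans (by ring)
  rw [hrhs]
  nlinarith [mul_nonpos_of_nonneg_of_nonpos h.hν.le hthird,
    mul_le_mul_of_nonneg_right (h.le_deriv_deriv_flux (u t x)) (sq_nonneg (deriv (u t) x))]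

/- At a positive space-time maximum of `u_x - D / (1 + σ D t)` the left time derivative is
nonnegative, whereas the equation differentiated in `x` makes it negative. -/
theorem deriv_le_riccati (h : IsBurgersSolution f σ ν u) (hD : 0 < D)
    (hu₀ : ∀ x, deriv (u 0) x ≤ D) (ht : 0 ≤ t) (x : ℝ) :
    deriv (u t) x ≤ D / (1 + σ * D * t) := by
  have hσ := h.hσ
  have hden : ∀ s ∈ Icc 0 t, 1 + σ * D * s ≠ 0 := fun s hs => by
    have := hs.1
    positivity
  obtain ⟨t₀, ht₀, x₀, hmax⟩ := exists_forall_le_of_periodic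
    (F := fun s y => deriv (u s) y - D / (1 + σ * D * s)) isCompact_Icc (nonempty_Icc.2 ht)
    zero_lt_one
    ((h.smoothEvolution.deriv.continuousOn.mono (prod_mono_left Icc_subset_Ici_self)).sub
      (continuousOn_const.div (by fun_prop) fun z hz => hden z.1 hz.1))
    fun s _ y => by simp only [periodic_deriv (h.periodic s) y]
  set q := deriv (u t₀) x₀
  set g := D / (1 + σ * D * t₀)
  suffices q ≤ g by linarith [hmax t (right_mem_Icc.2 ht) x]
  rcases ht₀.1.eq_or_lt with h0 | hpos
  · simp only [q, g, ← h0, mul_zero, add_zero, div_one]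
    exact hu₀ x₀
  have hg : 0 < g := by positivity
  have htime : HasDerivAt (fun s => deriv (u s) x₀ - D / (1 + σ * D * s))
      (deriv (burgersRHS f ν u t₀) x₀ - -(σ * g ^ 2)) t₀ :=
    (h.hasDerivAt_deriv_time hpos x₀).sub (hasDerivAt_riccati (hden t₀ ht₀))
  have hnonneg := hasDerivAt_nonneg_of_eventually_le_left htime <| by
    filter_upwards [Ioo_mem_nhdsLT hpos] with s hs using hmax s ⟨hs.1.le, hs.2.le.trans ht₀.2⟩ x₀
  have hspace := h.deriv_burgersRHS_le_of_isLocalMax (x := x₀) ht₀.1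
    (Eventually.of_forall fun y => (sub_le_sub_iff_right g).1 (hmax t₀ ht₀ y))
  have hsq : σ * q ^ 2 ≤ σ * g ^ 2 := by linarith
  exact le_of_abs_le (abs_le_of_sq_le_sq (le_of_mul_le_mul_left hsq hσ) hg.le)

theorem abs_le_riccati (h : IsBurgersSolution f σ ν u) (hD : 0 < D)
    (hu₀ : ∀ x, deriv (u 0) x ≤ D) (ht : 0 ≤ t) (x : ℝ) : |u t x| ≤ D / (1 + σ * D * t) := by
  simpa only [mul_one] using abs_le_of_periodic_of_deriv_le
    ((h.smoothEvolution.contDiff_one ht).differentiable one_ne_zero) (h.periodic t) zero_lt_one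
    (h.integral_eq_zero ht) (h.deriv_le_riccati hD hu₀ ht) x

protected theorem abs_le (h : IsBurgersSolution f σ ν u) (hD : 0 < D) (hu₀ : ∀ x, deriv (u 0) x ≤ D)
    (ht : 0 ≤ t) (x : ℝ) : |u t x| ≤ D := by
  have hσ := h.hσ
  refine (h.abs_le_riccati hD hu₀ ht x).trans (div_le_self hD.le ?_)
  rw [le_add_iff_nonneg_right]
  positivity

theorem inv_integral_abs_le_burgersD (h : IsBurgersSolution f σ ν u) :
    (∫ x in 0..1, |u 0 x|)⁻¹ ≤ burgersD u := by
  rw [← sobLp_zero_one (h.smoothEvolution.contDiff le_rfl).continuous]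
  exact le_max_left _ _

theorem integral_abs_pos (h : IsBurgersSolution f σ ν u) : 0 < ∫ x in 0..1, |u 0 x| := by
  have hcont := (h.smoothEvolution.contDiff le_rfl).continuous
  obtain ⟨x, hx⟩ := h.hinit
  obtain ⟨y, hy, hxy⟩ := (h.periodic 0).exists_mem_Ico₀ zero_lt_one x
  rw [hxy] at hx
  exact intervalIntegral.integral_pos zero_lt_one hcont.abs.continuousOn
    (fun _ _ => abs_nonneg _) ⟨y, Ico_subset_Icc_self hy, abs_pos.2 hx⟩

theorem burgersD_pos (h : IsBurgersSolution f σ ν u) : 0 < burgersD u :=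
  (inv_pos.2 h.integral_abs_pos).trans_le h.inv_integral_abs_le_burgersD

theorem deriv_le_burgersD (h : IsBurgersSolution f σ ν u) (x : ℝ) : deriv (u 0) x ≤ burgersD u :=
  (le_abs_self _).trans <| (abs_deriv_le_sobLp_one_top
    (h.smoothEvolution.deriv.contDiff le_rfl).continuous (h.periodic 0) x).trans (le_max_right _ _)

theorem inv_burgersD_sq_le_integral_sq (h : IsBurgersSolution f σ ν u) :
    (burgersD u)⁻¹ ^ 2 ≤ ∫ x in 0..1, u 0 x ^ 2 := by
  have hcont := (h.smoothEvolution.contDiff le_rfl).continuous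
  calc (burgersD u)⁻¹ ^ 2 ≤ (∫ x in 0..1, |u 0 x|) ^ 2 := by
        have := h.burgersD_pos
        gcongr
        exact inv_le_of_inv_le₀ h.integral_abs_pos h.inv_integral_abs_le_burgersD
    _ ≤ ∫ x in 0..1, u 0 x ^ 2 := by
        simpa using sq_integral_le_mul_integral_sq zero_le_one (hcont.abs.intervalIntegrable 0 1)
          ((hcont.abs.pow 2).intervalIntegrable 0 1)

end IsBurgersSolution

section TimeAvg

variable {a b : ℝ} {A B : ℝ → ℝ}

theorem timeAvg_mono (hab : a ≤ b) (hA : IntervalIntegrable A volume a b)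
    (hB : IntervalIntegrable B volume a b) (hle : ∀ t ∈ Icc a b, A t ≤ B t) :
    timeAvg a b A ≤ timeAvg a b B :=
  mul_le_mul_of_nonneg_left (intervalIntegral.integral_mono_on hab hA hB hle)
    (inv_nonneg.2 (sub_nonneg.2 hab))

theorem timeAvg_const (hab : a ≠ b) (c : ℝ) : timeAvg a b (fun _ => c) = c := by
  rw [timeAvg, intervalIntegral.integral_const, smul_eq_mul,
    inv_mul_cancel_left₀ (sub_ne_zero.2 hab.symm)]

theorem timeAvg_const_mul (c : ℝ) : timeAvg a b (fun t => c * A t) = c * timeAvg a b A := by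
  rw [timeAvg, intervalIntegral.integral_const_mul, mul_left_comm, timeAvg]

theorem timeAvg_add (hA : IntervalIntegrable A volume a b) (hB : IntervalIntegrable B volume a b) :
    timeAvg a b (fun t => A t + B t) = timeAvg a b A + timeAvg a b B := by
  rw [timeAvg, intervalIntegral.integral_add hA hB, mul_add, timeAvg, timeAvg]

theorem timeAvg_sub (hA : IntervalIntegrable A volume a b) (hB : IntervalIntegrable B volume a b) :
    timeAvg a b (fun t => A t - B t) = timeAvg a b A - timeAvg a b B := by
  rw [timeAvg, intervalIntegral.integral_sub hA hB, mul_sub, timeAvg, timeAvg]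

theorem structFun_zero (hab : a ≠ b) (u : ℝ → ℝ → ℝ) (ℓ : ℝ) : structFun a b u 0 ℓ = 1 := by
  simpa [structFun] using timeAvg_const hab 1

end TimeAvg

theorem intervalIntegrable_of_continuousOn_Ici {g : ℝ → ℝ} {c a b : ℝ}
    (hg : ContinuousOn g (Ici c)) (ha : c ≤ a) (hb : c ≤ b) : IntervalIntegrable g volume a b :=
  (hg.mono fun _ ht => (le_inf ha hb).trans ht.1).intervalIntegrable

theorem burgersT₁_pos {D Ct : ℝ} (hD : 0 < D) (hCt : 0 < Ct) : 0 < burgersT₁ D Ct := by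
  unfold burgersT₁
  positivity

theorem burgersT₁_lt_burgersT₂ {D Ct : ℝ} (hD : 0 < D) (hCt : 0 < Ct) (σ : ℝ) :
    burgersT₁ D Ct < burgersT₂ σ D Ct :=
  lt_max_of_lt_left (by linarith [burgersT₁_pos hD hCt])

namespace IsBurgersSolution

variable {f : ℝ → ℝ} {σ ν : ℝ} {u : ℝ → ℝ → ℝ} {t a b D Ct M : ℝ}

theorem sub_mul_le_integral_sq (h : IsBurgersSolution f σ ν u)
    (hY : ∀ s, 0 ≤ s → ∫ x in 0..1, deriv (u s) x ^ 2 ≤ Ct * ν⁻¹) (ht : 0 ≤ t) :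
    (∫ x in 0..1, u 0 x ^ 2) - 2 * Ct * t ≤ ∫ x in 0..1, u t x ^ 2 := by
  have hν := h.hν
  have hdecay := (convex_Ici (0 : ℝ)).mul_sub_le_image_sub_of_le_deriv (C := -(2 * Ct))
    (h.smoothEvolution.continuousOn_integral_sq 0 1)
    (fun s hs => (h.hasDerivAt_integral_sq
      (by simpa using hs)).differentiableAt.differentiableWithinAt)
    (fun s hs => by
      rw [interior_Ici, mem_Ioi] at hs
      rw [(h.hasDerivAt_integral_sq hs).deriv, neg_le_neg_iff]
      calc 2 * ν * ∫ x in 0..1, deriv (u s) x ^ 2 ≤ 2 * ν * (Ct * ν⁻¹) := by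
            gcongr
            exact hY s hs.le
        _ = 2 * Ct := by field_simp)
    0 self_mem_Ici t ht ht
  linarith

theorem two_mul_timeAvg_integral_sq_deriv (h : IsBurgersSolution f σ ν u) (ha : 0 < a)
    (hab : a ≤ b) : 2 * ν * timeAvg a b (fun t => ∫ x in 0..1, deriv (u t) x ^ 2)
      = (b - a)⁻¹ * ((∫ x in 0..1, u a x ^ 2) - ∫ x in 0..1, u b x ^ 2) := by
  have hbalance := intervalIntegral.integral_eq_sub_of_hasDerivAt (a := a) (b := b)
    (fun t ht => h.hasDerivAt_integral_sq (ha.trans_le (uIcc_of_le hab ▸ ht).1))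
    (intervalIntegrable_of_continuousOn_Ici
      (h.smoothEvolution.deriv.continuousOn_integral_sq 0 1) ha.le
      (ha.le.trans hab) |>.const_mul (2 * ν)).neg
  rw [intervalIntegral.integral_neg, intervalIntegral.integral_const_mul] at hbalance
  rw [timeAvg, mul_left_comm]
  congr 1
  linarith

theorem abs_le_of_two_mul_inv_le (h : IsBurgersSolution f σ ν u) (hD : 0 < D)
    (hu₀ : ∀ x, deriv (u 0) x ≤ D) (ht : 2 * D * σ⁻¹ ≤ t) (x : ℝ) : |u t x| ≤ D⁻¹ / 2 := by
  have hσ := h.hσ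
  have ht0 : 0 < t := lt_of_lt_of_le (by positivity) ht
  rw [mul_inv_le_iff₀ hσ] at ht
  refine (h.abs_le_riccati hD hu₀ ht0.le x).trans ?_
  rw [div_le_iff₀ (by positivity)]
  calc D ≤ D⁻¹ / 2 + t * σ / 2 := by linarith [inv_pos.2 hD]
    _ = D⁻¹ / 2 * (1 + σ * D * t) := by field_simp

theorem le_timeAvg_integral_sq_deriv (h : IsBurgersSolution f σ ν u) (hCt : 0 < Ct)
    (hY : ∀ s, 0 ≤ s → ∫ x in 0..1, deriv (u s) x ^ 2 ≤ Ct * ν⁻¹) (hD : burgersD u = D) :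
    D⁻¹ ^ 2 / (8 * (burgersT₂ σ D Ct - burgersT₁ D Ct)) / ν
      ≤ timeAvg (burgersT₁ D Ct) (burgersT₂ σ D Ct) fun t => ∫ x in 0..1, deriv (u t) x ^ 2 := by
  subst hD
  have hν := h.hν
  have hD := h.burgersD_pos
  have hT₁ := burgersT₁_pos hD hCt
  have hT₁₂ := burgersT₁_lt_burgersT₂ hD hCt σ
  have hT := sub_pos.2 hT₁₂
  have hstart : (burgersD u)⁻¹ ^ 2 / 2 ≤ ∫ x in 0..1, u (burgersT₁ (burgersD u) Ct) x ^ 2 := by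
    have hdrop : 2 * Ct * burgersT₁ (burgersD u) Ct = (burgersD u)⁻¹ ^ 2 / 2 := by
      unfold burgersT₁
      field_simp
      norm_num
    linarith [h.sub_mul_le_integral_sq hY hT₁.le, h.inv_burgersD_sq_le_integral_sq]
  have hend : ∫ x in 0..1, u (burgersT₂ σ (burgersD u) Ct) x ^ 2 ≤ ((burgersD u)⁻¹ / 2) ^ 2 := by
    have hcont := (h.smoothEvolution.contDiff (hT₁.trans hT₁₂).le).continuous
    have hle := intervalIntegral.integral_mono_on (μ := volume) (zero_le_one (α := ℝ))
      ((hcont.pow 2).intervalIntegrable 0 1) intervalIntegrable_const fun x _ =>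
      sq_le_sq' (neg_le_of_abs_le <| h.abs_le_of_two_mul_inv_le hD h.deriv_le_burgersD
        (le_max_right _ _) x) (le_of_abs_le <| h.abs_le_of_two_mul_inv_le hD h.deriv_le_burgersD
        (le_max_right _ _) x)
    simpa using hle
  rw [div_le_iff₀ hν, ← mul_le_mul_iff_right₀ (zero_lt_two (α := ℝ)), mul_comm (timeAvg _ _ _),
    ← mul_assoc, h.two_mul_timeAvg_integral_sq_deriv hT₁ hT₁₂.le]
  set T := burgersT₂ σ (burgersD u) Ct - burgersT₁ (burgersD u) Ct
  calc 2 * ((burgersD u)⁻¹ ^ 2 / (8 * T))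
      = T⁻¹ * ((burgersD u)⁻¹ ^ 2 / 2 - ((burgersD u)⁻¹ / 2) ^ 2) := by
        field_simp
        norm_num
    _ ≤ _ := by gcongr

theorem neg_integral_deriv_deriv_mul_burgersRHS_le (h : IsBurgersSolution f σ ν u) (ht : 0 ≤ t)
    (hM : ∀ x, |deriv f (u t x)| ≤ M) :
    -(2 * ∫ x in 0..1, deriv (deriv (u t)) x * burgersRHS f ν u t x)
      ≤ M ^ 2 / ν * (∫ x in 0..1, deriv (u t) x ^ 2)
        - ν * ∫ x in 0..1, deriv (deriv (u t)) x ^ 2 := by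
  have hν := h.hν
  have h1 := (h.smoothEvolution.deriv.contDiff ht).continuous
  have h2 := (h.smoothEvolution.deriv.deriv.contDiff ht).continuous
  have h3 := (h.smoothEvolution_burgersRHS.contDiff ht).continuous
  rw [← intervalIntegral.integral_const_mul, ← intervalIntegral.integral_neg,
    ← intervalIntegral.integral_const_mul, ← intervalIntegral.integral_const_mul,
    ← intervalIntegral.integral_sub (Continuous.intervalIntegrable (by fun_prop) _ _)
      (Continuous.intervalIntegrable (by fun_prop) _ _)]
  refine intervalIntegral.integral_mono_on zero_le_one
    (Continuous.intervalIntegrable (by fun_prop) _ _)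
    (Continuous.intervalIntegrable (by fun_prop) _ _) fun x _ => ?_
  have hMsq : deriv f (u t x) ^ 2 ≤ M ^ 2 :=
    sq_le_sq' (neg_le_of_abs_le (hM x)) (le_of_abs_le (hM x))
  set c := deriv f (u t x)
  set p := deriv (u t) x
  set q := deriv (deriv (u t)) x
  calc -(2 * (q * (ν * q - c * p))) = c ^ 2 / ν * p ^ 2 - ν * q ^ 2 - (c * p - ν * q) ^ 2 / ν := by
        field_simp
        ring
    _ ≤ M ^ 2 / ν * p ^ 2 - ν * q ^ 2 - 0 := by gcongr; positivity
    _ = M ^ 2 / ν * p ^ 2 - ν * q ^ 2 := sub_zero _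

theorem mul_timeAvg_integral_sq_deriv_deriv_le (h : IsBurgersSolution f σ ν u) (ha : 0 < a)
    (hab : a < b) (hY : ∀ s, 0 ≤ s → ∫ x in 0..1, deriv (u s) x ^ 2 ≤ Ct * ν⁻¹)
    (hM : ∀ s, 0 ≤ s → ∀ x, |deriv f (u s x)| ≤ M) :
    ν * timeAvg a b (fun t => ∫ x in 0..1, deriv (deriv (u t)) x ^ 2)
      ≤ ((b - a)⁻¹ + M ^ 2 / ν) * (Ct * ν⁻¹) := by
  have hν := h.hν
  have hb := ha.trans hab
  have hYcont := h.smoothEvolution.deriv.continuousOn_integral_sq 0 1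
  have hZ := intervalIntegrable_of_continuousOn_Ici
    (h.smoothEvolution.deriv.deriv.continuousOn_integral_sq 0 1) ha.le hb.le
  have hbalance := intervalIntegral.sub_le_integral_of_hasDeriv_right_of_le hab.le
    (hYcont.mono fun t ht => ha.le.trans ht.1)
    (fun t ht => (h.hasDerivAt_integral_sq_deriv (ha.trans ht.1)).hasDerivWithinAt)
    ((intervalIntegrable_iff_integrableOn_Icc_of_le hab.le).1
      (intervalIntegrable_const.sub (hZ.const_mul ν)))
    fun t ht => (h.neg_integral_deriv_deriv_mul_burgersRHS_le (ha.trans ht.1).le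
      (hM t (ha.trans ht.1).le)).trans <| sub_le_sub_right
        (mul_le_mul_of_nonneg_left (hY t (ha.trans ht.1).le) (by positivity)) _
  rw [intervalIntegral.integral_sub intervalIntegrable_const (hZ.const_mul ν),
    intervalIntegral.integral_const, intervalIntegral.integral_const_mul, smul_eq_mul] at hbalance
  have hYb : 0 ≤ ∫ x in 0..1, deriv (u b) x ^ 2 :=
    intervalIntegral.integral_nonneg zero_le_one fun _ _ => sq_nonneg _
  have hT := sub_pos.2 hab
  rw [timeAvg, mul_left_comm, inv_mul_le_iff₀ hT]
  calc ν * ∫ t in a..b, ∫ x in 0..1, deriv (deriv (u t)) x ^ 2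
      ≤ Ct * ν⁻¹ + (b - a) * (M ^ 2 / ν * (Ct * ν⁻¹)) := by linarith [hY a ha.le]
    _ = (b - a) * (((b - a)⁻¹ + M ^ 2 / ν) * (Ct * ν⁻¹)) := by field_simp

theorem timeAvg_integral_sq_deriv_deriv_le (h : IsBurgersSolution f σ ν u) (hν1 : ν ≤ 1)
    (ha : 0 < a) (hab : a < b) (hCt : 0 ≤ Ct)
    (hY : ∀ s, 0 ≤ s → ∫ x in 0..1, deriv (u s) x ^ 2 ≤ Ct * ν⁻¹)
    (hM : ∀ s, 0 ≤ s → ∀ x, |deriv f (u s x)| ≤ M) :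
    timeAvg a b (fun t => ∫ x in 0..1, deriv (deriv (u t)) x ^ 2)
      ≤ Ct * ((b - a)⁻¹ + M ^ 2) / ν ^ 3 := by
  have hν := h.hν
  have hT := inv_pos.2 (sub_pos.2 hab)
  refine le_of_mul_le_mul_left ?_ hν
  calc ν * timeAvg a b (fun t => ∫ x in 0..1, deriv (deriv (u t)) x ^ 2)
      ≤ ((b - a)⁻¹ + M ^ 2 / ν) * (Ct * ν⁻¹) :=
        h.mul_timeAvg_integral_sq_deriv_deriv_le ha hab hY hM
    _ ≤ ((b - a)⁻¹ / ν + M ^ 2 / ν) * (Ct * ν⁻¹) := by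
        gcongr
        exact le_div_self hT.le hν hν1
    _ = ν * (Ct * ((b - a)⁻¹ + M ^ 2) / ν ^ 3) := by field_simp

end IsBurgersSolution

section Moments

theorem sq_le_add_rpow {w k K : ℝ} (hw : 0 ≤ w) (hk : 0 < k) (hK : 0 < K) (p : ℝ) :
    w ^ 2 ≤ k * w + K⁻¹ * w ^ 3 + (k ^ (2 - p) + K ^ (2 - p)) * w ^ p := by
  have hlow : 0 ≤ k * w := by positivity
  have hhigh : 0 ≤ K⁻¹ * w ^ 3 := by positivity
  have hmid : 0 ≤ (k ^ (2 - p) + K ^ (2 - p)) * w ^ p := by positivity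
  rcases le_total w k with hwk | hkw
  · linarith [mul_le_mul_of_nonneg_right hwk hw, sq w]
  rcases le_total K w with hKw | hwK
  · have : w ^ 2 ≤ K⁻¹ * w ^ 3 := by
      rw [inv_mul_eq_div, le_div_iff₀ hK, pow_succ w 2]
      gcongr
    linarith
  have hw0 := hk.trans_le hkw
  have hpow : w ^ (2 - p) ≤ k ^ (2 - p) + K ^ (2 - p) := by
    have hk0 := Real.rpow_nonneg hk.le (2 - p)
    have hK0 := Real.rpow_nonneg hK.le (2 - p)
    rcases le_total p 2 with hp | hp
    · linarith [Real.rpow_le_rpow hw hwK (sub_nonneg.2 hp)]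
    · linarith [Real.rpow_le_rpow_of_nonpos hk hkw (sub_nonpos.2 hp)]
  have hsplit : w ^ 2 = w ^ (2 - p) * w ^ p := by
    rw [← Real.rpow_add hw0, sub_add_cancel, Real.rpow_two]
  linarith [mul_le_mul_of_nonneg_right hpow (Real.rpow_nonneg hw p)]

theorem abs_add_le_rpow {w K p : ℝ} (hwK : w ≤ K) (hK : 0 ≤ K) (hp : p ≤ 1) :
    |w| + w ≤ 2 * K ^ (1 - p) * |w| ^ p := by
  rcases le_or_gt w 0 with hw | hw
  · calc |w| + w = 0 := by rw [abs_of_nonpos hw, neg_add_cancel]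
      _ ≤ 2 * K ^ (1 - p) * |w| ^ p := by positivity
  · rw [abs_of_pos hw]
    calc w + w = 2 * w ^ (1 - p) * w ^ p := by
          rw [mul_assoc, ← Real.rpow_add hw, sub_add_cancel, Real.rpow_one, two_mul]
      _ ≤ 2 * K ^ (1 - p) * w ^ p := by
          gcongr

/-- The constant in the lower bound of the `p`-th moment of a nonnegative function whose first and
third moments are at most `a` and `c` and whose second moment is at least `b`. -/
noncomputable def momentConst (a b c p : ℝ) : ℝ :=
  b / 2 / ((b / (4 * a)) ^ (2 - p) + (4 * c / b) ^ (2 - p))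

theorem momentConst_pos {a b c : ℝ} (ha : 0 < a) (hb : 0 < b) (hc : 0 < c) (p : ℝ) :
    0 < momentConst a b c p := by
  unfold momentConst
  positivity

variable {Ω : Type*} [MeasurableSpace Ω] {μ : Measure Ω} {w : Ω → ℝ} {a b c m δ K p : ℝ}

theorem integral_sq_le_of_moments (hw : 0 ≤ w) (hw1 : Integrable w μ)
    (hw2 : Integrable (fun y => w y ^ 2) μ) (hw3 : Integrable (fun y => w y ^ 3) μ)
    (hwp : Integrable (fun y => w y ^ p) μ) {k : ℝ} (hk : 0 < k) (hK : 0 < K) :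
    ∫ y, w y ^ 2 ∂μ ≤ k * ∫ y, w y ∂μ + K⁻¹ * ∫ y, w y ^ 3 ∂μ
      + (k ^ (2 - p) + K ^ (2 - p)) * ∫ y, w y ^ p ∂μ := by
  have hw13 := (hw1.const_mul k).add (hw3.const_mul K⁻¹)
  refine (integral_mono hw2 (hw13.add (hwp.const_mul (k ^ (2 - p) + K ^ (2 - p))))
    fun y => sq_le_add_rpow (hw y) hk hK p).trans_eq ?_
  rw [integral_add' hw13 (hwp.const_mul _), integral_add' (hw1.const_mul k) (hw3.const_mul K⁻¹)]
  simp only [integral_const_mul]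

theorem momentConst_mul_le_integral_rpow (hw : 0 ≤ w) (hw1 : Integrable w μ)
    (hw2 : Integrable (fun y => w y ^ 2) μ) (hw3 : Integrable (fun y => w y ^ 3) μ)
    (hwp : Integrable (fun y => w y ^ p) μ) (ha : 0 < a) (hb : 0 < b) (hc : 0 < c) (hδ : 0 < δ)
    (h1 : ∫ y, w y ∂μ ≤ a * (m * δ)) (h2 : b * (m * δ ^ 2) ≤ ∫ y, w y ^ 2 ∂μ)
    (h3 : ∫ y, w y ^ 3 ∂μ ≤ c * (m * δ ^ 3)) :
    momentConst a b c p * (m * δ ^ p) ≤ ∫ y, w y ^ p ∂μ := by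
  set k := b / (4 * a)
  set K := 4 * c / b
  have hk : 0 < k := by positivity
  have hK : 0 < K := by positivity
  have hinterp := integral_sq_le_of_moments hw hw1 hw2 hw3 hwp (mul_pos hk hδ) (mul_pos hK hδ)
  have hfirst : k * δ * ∫ y, w y ∂μ ≤ b * (m * δ ^ 2) / 4 := by
    calc k * δ * ∫ y, w y ∂μ ≤ k * δ * (a * (m * δ)) := by gcongr
      _ = b * (m * δ ^ 2) / 4 := by
        simp only [k]
        field_simp
  have hthird : (K * δ)⁻¹ * ∫ y, w y ^ 3 ∂μ ≤ b * (m * δ ^ 2) / 4 := by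
    calc (K * δ)⁻¹ * ∫ y, w y ^ 3 ∂μ ≤ (K * δ)⁻¹ * (c * (m * δ ^ 3)) := by gcongr
      _ = b * (m * δ ^ 2) / 4 := by
        simp only [K]
        field_simp
  have hδp : δ ^ 2 = δ ^ (2 - p) * δ ^ p := by
    rw [← Real.rpow_add hδ, sub_add_cancel, Real.rpow_two]
  rw [Real.mul_rpow hk.le hδ.le, Real.mul_rpow hK.le hδ.le, ← add_mul] at hinterp
  rw [momentConst, div_mul_eq_mul_div, div_le_iff₀ (by positivity)]
  refine le_of_mul_le_mul_left ?_ (Real.rpow_pos_of_pos hδ (2 - p))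
  rw [hδp] at h2 hfirst hthird
  linarith

theorem integral_abs_le_rpow_of_integral_eq_zero (hw : Integrable w μ)
    (hwp : Integrable (fun y => |w y| ^ p) μ) (hwK : ∀ᵐ y ∂μ, w y ≤ K) (hK : 0 ≤ K)
    (hw0 : ∫ y, w y ∂μ = 0) (hp : p ≤ 1) :
    ∫ y, |w y| ∂μ ≤ 2 * K ^ (1 - p) * ∫ y, |w y| ^ p ∂μ := by
  calc ∫ y, |w y| ∂μ = ∫ y, (|w y| + w y) ∂μ := by rw [integral_add hw.abs hw, hw0, add_zero]
    _ ≤ ∫ y, 2 * K ^ (1 - p) * |w y| ^ p ∂μ :=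
        integral_mono_ae (hw.abs.add hw) (hwp.const_mul _)
          (hwK.mono fun y hy => abs_add_le_rpow hy hK hp)
    _ = 2 * K ^ (1 - p) * ∫ y, |w y| ^ p ∂μ := integral_const_mul _ _

end Moments

/-- The space increment `u(t, x + ℓ) - u(t, x)`, whose averaged absolute `p`-th power over
`[T₁, T₂] × S¹` is the structure function. -/
def increment (u : ℝ → ℝ → ℝ) (ℓ t x : ℝ) : ℝ := u t (x + ℓ) - u t x

/-- The strip `(a, b] × (0, 1]` over which a structure function averages. -/
def timeStrip (a b : ℝ) : Set (ℝ × ℝ) := Ioc a b ×ˢ Ioc 0 1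

section Average

variable {F : ℝ → ℝ → ℝ} {a b : ℝ}

theorem integrableOn_timeStrip (hF : ContinuousOn (uncurry F) (Ici 0 ×ˢ univ)) (ha : 0 ≤ a) :
    IntegrableOn (uncurry F) (timeStrip a b) :=
  ((hF.mono (prod_mono (Icc_subset_Ici_self.trans (Ici_subset_Ici.2 ha))
    (subset_univ _))).integrableOn_compact (isCompact_Icc.prod isCompact_Icc)).mono_set
      (prod_mono Ioc_subset_Icc_self Ioc_subset_Icc_self)

theorem timeAvg_integral_eq_setAverage (hF : ContinuousOn (uncurry F) (Ici 0 ×ˢ univ)) (ha : 0 ≤ a)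
    (hab : a ≤ b) :
    timeAvg a b (fun t => ∫ x in Ioc 0 1, F t x) = ⨍ z in timeStrip a b, uncurry F z := by
  have hvol : volume.real (timeStrip a b) = b - a := by
    rw [timeStrip, Measure.volume_eq_prod, measureReal_prod_prod, Real.volume_real_Ioc_of_le hab,
      Real.volume_real_Ioc_of_le zero_le_one, sub_zero, mul_one]
  rw [timeAvg, setAverage_eq, hvol, intervalIntegral.integral_of_le hab, smul_eq_mul, timeStrip,
    Measure.volume_eq_prod, setIntegral_prod _ (integrableOn_timeStrip hF ha)]
  rfl

end Average

namespace SmoothEvolution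

variable {u : ℝ → ℝ → ℝ} {a b p ℓ : ℝ}

theorem continuousOn_increment (hu : SmoothEvolution u) (ℓ : ℝ) :
    ContinuousOn (uncurry (increment u ℓ)) (Ici 0 ×ˢ univ) :=
  (hu.continuousOn.comp (f := fun z : ℝ × ℝ => (z.1, z.2 + ℓ)) (by fun_prop)
    fun _ hz => ⟨hz.1, mem_univ _⟩).sub hu.continuousOn

theorem continuousOn_abs_increment_rpow (hu : SmoothEvolution u) (hp : 0 ≤ p) (ℓ : ℝ) :
    ContinuousOn (uncurry fun t x => |increment u ℓ t x| ^ p) (Ici 0 ×ˢ univ) :=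
  (hu.continuousOn_increment ℓ).abs.rpow_const fun _ _ => Or.inr hp

theorem structFun_eq_setAverage (hu : SmoothEvolution u) (hp : 0 ≤ p) (ha : 0 ≤ a) (hab : a ≤ b)
    (ℓ : ℝ) :
    structFun a b u p ℓ = ⨍ z in timeStrip a b, |uncurry (increment u ℓ) z| ^ p :=
  timeAvg_integral_eq_setAverage (hu.continuousOn_abs_increment_rpow hp ℓ) ha hab

theorem intervalIntegrable_integral_abs_increment_rpow (hu : SmoothEvolution u) (hp : 0 ≤ p)
    (ha : 0 ≤ a) (hb : 0 ≤ b) (ℓ : ℝ) :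
    IntervalIntegrable (fun t => ∫ x in Ioc 0 1, |u t (x + ℓ) - u t x| ^ p) volume a b := by
  simpa only [increment, intervalIntegral.integral_of_le zero_le_one] using
    intervalIntegrable_of_continuousOn_Ici
      (continuousOn_intervalIntegral_param (hu.continuousOn_abs_increment_rpow hp ℓ) 0 1) ha hb

theorem intervalIntegrable_integral_sq (hu : SmoothEvolution u) (ha : 0 ≤ a) (hb : 0 ≤ b) :
    IntervalIntegrable (fun t => ∫ x in 0..1, u t x ^ 2) volume a b :=
  intervalIntegrable_of_continuousOn_Ici (hu.continuousOn_integral_sq 0 1) ha hb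

theorem setAverage_increment (hu : SmoothEvolution u) (hper : ∀ t, Periodic (u t) 1) (ha : 0 ≤ a)
    (hab : a ≤ b) (ℓ : ℝ) : ⨍ z in timeStrip a b, uncurry (increment u ℓ) z = 0 := by
  rw [← timeAvg_integral_eq_setAverage (hu.continuousOn_increment ℓ) ha hab, timeAvg,
    intervalIntegral.integral_zero_ae, mul_zero]
  refine Eventually.of_forall fun t ht => ?_
  rw [uIoc_of_le hab] at ht
  simpa only [increment, intervalIntegral.integral_of_le zero_le_one] using
    integral_sub_eq_zero_of_periodic (hu.contDiff (ha.trans ht.1.le)).continuous (hper t) ℓ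

theorem sub_le_structFun_two (hu : SmoothEvolution u) (hper : ∀ t, Periodic (u t) 1) (ha : 0 ≤ a)
    (hab : a ≤ b) (hℓ : 0 ≤ ℓ) :
    ℓ ^ 2 / 2 * timeAvg a b (fun t => ∫ x in 0..1, deriv (u t) x ^ 2)
        - ℓ ^ 4 * timeAvg a b (fun t => ∫ x in 0..1, deriv (deriv (u t)) x ^ 2)
      ≤ structFun a b u 2 ℓ := by
  have hY := (hu.deriv.intervalIntegrable_integral_sq ha (ha.trans hab)).const_mul (ℓ ^ 2 / 2)
  have hZ := (hu.deriv.deriv.intervalIntegrable_integral_sq ha (ha.trans hab)).const_mul (ℓ ^ 4)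
  rw [← timeAvg_const_mul, ← timeAvg_const_mul, ← timeAvg_sub hY hZ]
  refine timeAvg_mono hab (hY.sub hZ) (hu.intervalIntegrable_integral_abs_increment_rpow
    zero_le_two ha (ha.trans hab) ℓ) fun t ht => ?_
  simpa only [Real.rpow_two, sq_abs, intervalIntegral.integral_of_le zero_le_one] using
    le_integral_sq_sub_of_periodic (hu.contDiff_two (ha.trans ht.1)) (hper t) zero_le_one hℓ

theorem structFun_three_le (hu : SmoothEvolution u) (hper : ∀ t, Periodic (u t) 1) (ha : 0 ≤ a)
    (hab : a < b) (hℓ : 0 ≤ ℓ) {ε y : ℝ} (hε : 0 < ε)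
    (hy : ∀ t, 0 ≤ t → ∫ x in 0..1, deriv (u t) x ^ 2 ≤ y) :
    structFun a b u 3 ℓ ≤ ℓ ^ 3 * y / 2 *
      (ε⁻¹ + y + ε ^ 2 * timeAvg a b fun t => ∫ x in 0..1, deriv (deriv (u t)) x ^ 2) := by
  have hZ := (hu.deriv.deriv.intervalIntegrable_integral_sq ha (ha.trans hab.le)).const_mul (ε ^ 2)
  rw [← timeAvg_const_mul, ← timeAvg_const hab.ne (ε⁻¹ + y),
    ← timeAvg_add intervalIntegrable_const hZ, ← timeAvg_const_mul]
  refine timeAvg_mono hab.le (hu.intervalIntegrable_integral_abs_increment_rpow (by norm_num) ha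
    (ha.trans hab.le) ℓ) ((intervalIntegrable_const.add hZ).const_mul _) fun t ht => ?_
  have ht0 := ha.trans ht.1
  have hcube := integral_abs_cube_sub_le_of_periodic (hu.contDiff_one ht0) (hper t) zero_le_one hℓ
    (abs_deriv_le_of_periodic (hu.contDiff_two ht0) (hper t) zero_lt_one hε)
  have hYt : 0 ≤ ∫ x in 0..1, deriv (u t) x ^ 2 :=
    intervalIntegral.integral_nonneg zero_le_one fun _ _ => sq_nonneg _
  have hZt : 0 ≤ ∫ x in 0..1, deriv (deriv (u t)) x ^ 2 :=
    intervalIntegral.integral_nonneg zero_le_one fun _ _ => sq_nonneg _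
  calc ∫ x in Ioc 0 1, |u t (x + ℓ) - u t x| ^ (3 : ℝ)
      = ∫ x in 0..1, |u t (x + ℓ) - u t x| ^ 3 := by
        rw [intervalIntegral.integral_of_le zero_le_one]
        norm_cast
    _ ≤ _ := hcube
    _ ≤ ℓ ^ 3 * ((ε⁻¹ + y + ε ^ 2 * ∫ x in 0..1, deriv (deriv (u t)) x ^ 2) / 2) * y := by
        have hy0 := hYt.trans (hy t ht0)
        gcongr <;> exact hy t ht0
    _ = _ := by ring

theorem structFun_one_le (hu : SmoothEvolution u) (hper : ∀ t, Periodic (u t) 1) (ha : 0 ≤ a)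
    (hab : a ≤ b) (hℓ : 0 ≤ ℓ) {D : ℝ} (hD : 0 ≤ D) (hderiv : ∀ t, 0 ≤ t → ∀ x, deriv (u t) x ≤ D)
    (hp : 0 ≤ p) (hp1 : p ≤ 1) :
    structFun a b u 1 ℓ ≤ 2 * (D * ℓ) ^ (1 - p) * structFun a b u p ℓ := by
  rw [hu.structFun_eq_setAverage zero_le_one ha hab, hu.structFun_eq_setAverage hp ha hab]
  simp only [Real.rpow_one]
  refine integral_abs_le_rpow_of_integral_eq_zero
    (integrableOn_timeStrip (hu.continuousOn_increment ℓ) ha).to_average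
    (integrableOn_timeStrip (hu.continuousOn_abs_increment_rpow hp ℓ) ha).to_average ?_
    (mul_nonneg hD hℓ) (hu.setAverage_increment hper ha hab ℓ) hp1
  refine Measure.ae_smul_measure ?_ _
  filter_upwards [ae_restrict_mem (measurableSet_Ioc.prod measurableSet_Ioc)] with z hz
  have ht0 := ha.trans hz.1.1.le
  have := image_sub_le_mul_sub_of_deriv_le
    ((hu.contDiff_one ht0).differentiable one_ne_zero) (hderiv z.1 ht0)
    (le_add_of_nonneg_right hℓ : z.2 ≤ z.2 + ℓ)
  simpa only [uncurry, increment, add_sub_cancel_left] using this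

theorem momentConst_mul_le_structFun (hu : SmoothEvolution u) (ha : 0 ≤ a) (hab : a ≤ b)
    {c₁ c₂ c₃ m δ : ℝ} (hc₁ : 0 < c₁) (hc₂ : 0 < c₂) (hc₃ : 0 < c₃) (hδ : 0 < δ)
    (h1 : structFun a b u 1 ℓ ≤ c₁ * (m * δ)) (h2 : c₂ * (m * δ ^ 2) ≤ structFun a b u 2 ℓ)
    (h3 : structFun a b u 3 ℓ ≤ c₃ * (m * δ ^ 3)) (hp : 0 ≤ p) :
    momentConst c₁ c₂ c₃ p * (m * δ ^ p) ≤ structFun a b u p ℓ := by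
  have hint : ∀ q : ℝ, 0 ≤ q → Integrable (fun z => |uncurry (increment u ℓ) z| ^ q)
      ((volume.restrict (timeStrip a b) univ)⁻¹ • volume.restrict (timeStrip a b)) := fun q hq =>
    (integrableOn_timeStrip (hu.continuousOn_abs_increment_rpow hq ℓ) ha).to_average
  have hint1 := hint 1 zero_le_one
  have hint2 := hint 2 zero_le_two
  have hint3 := hint 3 zero_le_three
  rw [hu.structFun_eq_setAverage (by norm_num) ha hab] at h1 h2 h3
  rw [hu.structFun_eq_setAverage hp ha hab]
  simp only [Real.rpow_one] at h1 hint1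
  norm_cast at h2 h3 hint2 hint3
  exact momentConst_mul_le_integral_rpow (fun _ => abs_nonneg _) hint1 hint2 hint3 (hint p hp)
    hc₁ hc₂ hc₃ hδ h1 h2 h3

end SmoothEvolution

namespace IsBurgersSolution

variable {f : ℝ → ℝ} {σ ν : ℝ} {u : ℝ → ℝ → ℝ} {t a b p ℓ D Ct α β : ℝ}

theorem deriv_le (h : IsBurgersSolution f σ ν u) (hD : burgersD u = D) (ht : 0 ≤ t) (x : ℝ) :
    deriv (u t) x ≤ D := by
  subst hD
  have hσ := h.hσ
  have hD := h.burgersD_pos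
  refine (h.deriv_le_riccati hD h.deriv_le_burgersD ht x).trans (div_le_self hD.le ?_)
  rw [le_add_iff_nonneg_right]
  positivity

theorem structFun_one_le_rpow (h : IsBurgersSolution f σ ν u) (hD : burgersD u = D) (ha : 0 ≤ a)
    (hab : a ≤ b) (hℓ : 0 ≤ ℓ) (hp : 0 ≤ p) (hp1 : p ≤ 1) :
    structFun a b u 1 ℓ ≤ 2 * (D * ℓ) ^ (1 - p) * structFun a b u p ℓ :=
  h.smoothEvolution.structFun_one_le h.periodic ha hab hℓ (hD ▸ h.burgersD_pos.le)
    (fun _ => h.deriv_le hD) hp hp1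

theorem structFun_one_le (h : IsBurgersSolution f σ ν u) (hD : burgersD u = D) (ha : 0 ≤ a)
    (hab : a < b) (hℓ : 0 ≤ ℓ) : structFun a b u 1 ℓ ≤ 2 * D * ℓ := by
  have hle := h.structFun_one_le_rpow hD ha hab.le hℓ le_rfl zero_le_one
  rwa [structFun_zero hab.ne, mul_one, sub_zero, Real.rpow_one,
    ← mul_assoc] at hle

theorem le_structFun_two (h : IsBurgersSolution f σ ν u) (ha : 0 ≤ a) (hab : a ≤ b) (hℓ : 0 ≤ ℓ)
    (hY : α / ν ≤ timeAvg a b fun t => ∫ x in 0..1, deriv (u t) x ^ 2)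
    (hZ : timeAvg a b (fun t => ∫ x in 0..1, deriv (deriv (u t)) x ^ 2) ≤ β / ν ^ 3)
    (hℓν : β * ℓ ^ 2 ≤ α / 4 * ν ^ 2) :
    α / 4 * (ν * (ℓ / ν) ^ 2) ≤ structFun a b u 2 ℓ := by
  have hν := h.hν
  refine le_trans ?_ (h.smoothEvolution.sub_le_structFun_two h.periodic ha hab hℓ)
  calc α / 4 * (ν * (ℓ / ν) ^ 2) = ℓ ^ 2 / 2 * (α / ν) - ℓ ^ 2 / ν ^ 3 * (α / 4 * ν ^ 2) := by
        field_simp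
        norm_num
    _ ≤ ℓ ^ 2 / 2 * (α / ν) - ℓ ^ 2 / ν ^ 3 * (β * ℓ ^ 2) := by gcongr
    _ = ℓ ^ 2 / 2 * (α / ν) - ℓ ^ 4 * (β / ν ^ 3) := by ring
    _ ≤ _ := by gcongr

theorem structFun_three_le (h : IsBurgersSolution f σ ν u) (ha : 0 ≤ a) (hab : a < b) (hℓ : 0 ≤ ℓ)
    (hCt : 0 ≤ Ct) (hY : ∀ s, 0 ≤ s → ∫ x in 0..1, deriv (u s) x ^ 2 ≤ Ct * ν⁻¹)
    (hZ : timeAvg a b (fun t => ∫ x in 0..1, deriv (deriv (u t)) x ^ 2) ≤ β / ν ^ 3) :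
    structFun a b u 3 ℓ ≤ Ct * (1 + Ct + β) / 2 * (ν * (ℓ / ν) ^ 3) := by
  have hν := h.hν
  calc structFun a b u 3 ℓ
      ≤ _ := h.smoothEvolution.structFun_three_le h.periodic ha hab hℓ hν hY
    _ ≤ ℓ ^ 3 * (Ct * ν⁻¹) / 2 * (ν⁻¹ + Ct * ν⁻¹ + ν ^ 2 * (β / ν ^ 3)) := by gcongr
    _ = Ct * (1 + Ct + β) / 2 * (ν * (ℓ / ν) ^ 3) := by field_simp

theorem mul_rpow_le_structFun_of_le_one (h : IsBurgersSolution f σ ν u) (hD : burgersD u = D)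
    (ha : 0 ≤ a) (hab : a ≤ b) (hℓ : 0 < ℓ) {c : ℝ} (hc : c * ℓ ≤ structFun a b u 1 ℓ) (hp : 0 ≤ p)
    (hp1 : p ≤ 1) : c / (2 * D ^ (1 - p)) * ℓ ^ p ≤ structFun a b u p ℓ := by
  have hDpos : 0 < D := hD ▸ h.burgersD_pos
  rw [div_mul_eq_mul_div, div_le_iff₀ (by positivity)]
  refine le_of_mul_le_mul_left ?_ (Real.rpow_pos_of_pos hℓ (1 - p))
  calc ℓ ^ (1 - p) * (c * ℓ ^ p) = c * ℓ := by
        rw [mul_left_comm, ← Real.rpow_add hℓ, sub_add_cancel, Real.rpow_one]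
    _ ≤ 2 * (D * ℓ) ^ (1 - p) * structFun a b u p ℓ :=
        hc.trans (h.structFun_one_le_rpow hD ha hab hℓ.le hp hp1)
    _ = ℓ ^ (1 - p) * (structFun a b u p ℓ * (2 * D ^ (1 - p))) := by
        rw [Real.mul_rpow hDpos.le hℓ.le]
        ring

theorem exists_abs_deriv_flux_le (h : IsBurgersSolution f σ ν u) (D : ℝ) :
    ∃ M, ∀ y, |y| ≤ D → |deriv f y| ≤ M := by
  obtain ⟨M, hM⟩ := isCompact_Icc.exists_bound_of_continuousOn
    (h.contDiff_deriv_flux.continuous.continuousOn (s := Icc (-D) D))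
  exact ⟨M, fun y hy => hM y (abs_le.1 hy)⟩

end IsBurgersSolution

section UniformBounds

variable {f : ℝ → ℝ} {σ D Ct : ℝ}

theorem exists_structFun_moment_bounds (hCt : 0 < Ct) (hD : 0 < D)
    (hf : ∃ M, ∀ y, |y| ≤ D → |deriv f y| ≤ M)
    (hCtb : ∀ ν, 0 < ν → ν ≤ 1 → ∀ u, IsBurgersSolution f σ ν u → burgersD u = D →
      ∀ t, 0 ≤ t → sobLp 1 2 (u t) ^ 2 ≤ Ct * ν⁻¹) :
    ∃ C₁ > 0, ∃ c₁ > 0, ∃ c₂ > 0, ∃ c₃ > 0, ∀ ν ≤ 1, ∀ u, IsBurgersSolution f σ ν u →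
      burgersD u = D → ∀ ℓ, 0 < ℓ → ℓ ≤ C₁ * ν →
        structFun (burgersT₁ D Ct) (burgersT₂ σ D Ct) u 1 ℓ ≤ c₁ * (ν * (ℓ / ν)) ∧
        c₂ * (ν * (ℓ / ν) ^ 2) ≤ structFun (burgersT₁ D Ct) (burgersT₂ σ D Ct) u 2 ℓ ∧
        structFun (burgersT₁ D Ct) (burgersT₂ σ D Ct) u 3 ℓ ≤ c₃ * (ν * (ℓ / ν) ^ 3) := by
  obtain ⟨M, hM⟩ := hf
  have hT₁ := burgersT₁_pos hD hCt
  have hT₁₂ := burgersT₁_lt_burgersT₂ hD hCt σ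
  have : 0 < burgersT₂ σ D Ct - burgersT₁ D Ct := sub_pos.2 hT₁₂
  obtain ⟨α, hα, hαpos⟩ : ∃ α, α = D⁻¹ ^ 2 / (8 * (burgersT₂ σ D Ct - burgersT₁ D Ct)) ∧ 0 < α :=
    ⟨_, rfl, by positivity⟩
  obtain ⟨β, hβ, hβpos⟩ :
      ∃ β, β = Ct * ((burgersT₂ σ D Ct - burgersT₁ D Ct)⁻¹ + M ^ 2) ∧ 0 < β :=
    ⟨_, rfl, by positivity⟩
  refine ⟨√(α / (4 * β)), by positivity, 2 * D, by positivity, α / 4, by positivity,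
    Ct * (1 + Ct + β) / 2, by positivity, fun ν hν1 u h hDu ℓ hℓ hℓC => ?_⟩
  have hY : ∀ t, 0 ≤ t → ∫ x in 0..1, deriv (u t) x ^ 2 ≤ Ct * ν⁻¹ := fun t ht => by
    rw [← sobLp_one_two_sq (h.smoothEvolution.deriv.contDiff ht).continuous]
    exact hCtb ν h.hν hν1 u h hDu t ht
  have hYavg := hα ▸ h.le_timeAvg_integral_sq_deriv hCt hY hDu
  have hZavg := hβ ▸ h.timeAvg_integral_sq_deriv_deriv_le hν1 hT₁ hT₁₂ hCt.le hY fun s hs x =>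
    hM _ (h.abs_le hD (hDu ▸ h.deriv_le_burgersD) hs x)
  have hℓν : β * ℓ ^ 2 ≤ α / 4 * ν ^ 2 := by
    calc β * ℓ ^ 2 ≤ β * (√(α / (4 * β)) * ν) ^ 2 := by gcongr
      _ = α / 4 * ν ^ 2 := by
        rw [mul_pow, Real.sq_sqrt (by positivity)]
        field_simp
  have hS₁ : structFun (burgersT₁ D Ct) (burgersT₂ σ D Ct) u 1 ℓ ≤ 2 * D * (ν * (ℓ / ν)) := by
    rw [mul_div_cancel₀ ℓ h.hν.ne']
    exact h.structFun_one_le hDu hT₁.le hT₁₂ hℓ.le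
  exact ⟨hS₁,
    h.le_structFun_two hT₁.le hT₁₂.le hℓ.le hYavg hZavg hℓν,
    h.structFun_three_le hT₁.le hT₁₂ hℓ.le hCt.le hY hZavg⟩

theorem exists_mul_rpow_le_structFun (hCt : 0 < Ct) (hD : 0 < D)
    (hf : ∃ M, ∀ y, |y| ≤ D → |deriv f y| ≤ M)
    (hCtb : ∀ ν, 0 < ν → ν ≤ 1 → ∀ u, IsBurgersSolution f σ ν u → burgersD u = D →
      ∀ t, 0 ≤ t → sobLp 1 2 (u t) ^ 2 ≤ Ct * ν⁻¹) :
    ∃ C₁ > 0, ∃ c : ℝ → ℝ, (∀ p, 0 < c p) ∧ ∀ ν ≤ 1, ∀ u, IsBurgersSolution f σ ν u →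
      burgersD u = D → ∀ ℓ, 0 < ℓ → ℓ ≤ C₁ * ν → ∀ p, 0 ≤ p → c p * (ℓ ^ p * ν ^ (-(p - 1)))
        ≤ structFun (burgersT₁ D Ct) (burgersT₂ σ D Ct) u p ℓ := by
  obtain ⟨C₁, hC₁, c₁, hc₁, c₂, hc₂, c₃, hc₃, hmoments⟩ :=
    exists_structFun_moment_bounds hCt hD hf hCtb
  refine ⟨C₁, hC₁, momentConst c₁ c₂ c₃, momentConst_pos hc₁ hc₂ hc₃,
    fun ν hν1 u h hDu ℓ hℓ hℓC p hp => ?_⟩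
  have hν := h.hν
  obtain ⟨h1, h2, h3⟩ := hmoments ν hν1 u h hDu ℓ hℓ hℓC
  have hscale : ℓ ^ p * ν ^ (-(p - 1)) = ν * (ℓ / ν) ^ p := by
    rw [neg_sub, Real.rpow_sub hν, Real.rpow_one, Real.div_rpow hℓ.le hν.le]
    ring
  rw [hscale]
  exact h.smoothEvolution.momentConst_mul_le_structFun (burgersT₁_pos hD hCt).le
    (burgersT₁_lt_burgersT₂ hD hCt σ).le hc₁ hc₂ hc₃ (div_pos hℓ hν) h1 h2 h3 hp

end UniformBounds

/-- There exist `ν₀ ∈ (0,1]`, `C₁ > 0` and, for each `p ≥ 0`, a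
constant `c(p) > 0`, such that for every `ν ∈ (0,ν₀]` and every
`ℓ ∈ (0, C₁ν]`, `S_p(ℓ) ≥ c(p) ℓ^p` if `0 ≤ p ≤ 1` and
`S_p(ℓ) ≥ c(p) ℓ^p ν^{-(p-1)}` if `p ≥ 1`. -/
theorem statement17 (f : ℝ → ℝ) (σ D Ct : ℝ) (hCt : 0 < Ct)
    (hCtb : ∀ ν, 0 < ν → ν ≤ 1 →
      ∀ u : ℝ → ℝ → ℝ, IsBurgersSolution f σ ν u → burgersD u = D →
        ∀ t, 0 ≤ t → sobLp 1 2 (u t) ^ 2 ≤ Ct * ν⁻¹) :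
    ∃ ν₀, (0 < ν₀ ∧ ν₀ ≤ 1) ∧ ∃ C₁ > (0 : ℝ), ∀ p : ℝ, 0 ≤ p → ∃ c > 0,
      ∀ ν, 0 < ν → ν ≤ ν₀ →
        ∀ u : ℝ → ℝ → ℝ, IsBurgersSolution f σ ν u → burgersD u = D →
          ∀ ℓ, 0 < ℓ → ℓ ≤ C₁ * ν →
            (p ≤ 1 →
              c * ℓ ^ p
                ≤ structFun (burgersT₁ D Ct) (burgersT₂ σ D Ct) u p ℓ) ∧
            (1 ≤ p →
              c * (ℓ ^ p * ν ^ (-(p - 1)))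
                ≤ structFun (burgersT₁ D Ct) (burgersT₂ σ D Ct) u p ℓ) := by
  by_cases hex : ∃ ν u, IsBurgersSolution f σ ν u ∧ burgersD u = D
  swap
  · exact ⟨1, ⟨one_pos, le_rfl⟩, 1, one_pos, fun p _ => ⟨1, one_pos, fun ν _ _ u h hDu =>
      absurd ⟨ν, u, h, hDu⟩ hex⟩⟩
  obtain ⟨ν', u', h', hDu'⟩ := hex
  have hD : 0 < D := hDu' ▸ h'.burgersD_pos
  obtain ⟨C₁, hC₁, c, hc, hlower⟩ :=
    exists_mul_rpow_le_structFun hCt hD (h'.exists_abs_deriv_flux_le D) hCtb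
  refine ⟨1, ⟨one_pos, le_rfl⟩, C₁, hC₁, fun p hp => ⟨min (c 1 / (2 * D ^ (1 - p))) (c p),
    lt_min (div_pos (hc 1) (by positivity)) (hc p), fun ν hν hν1 u h hDu ℓ hℓ hℓC => ?_⟩⟩
  constructor <;> intro hp1
  · have hone := hlower ν hν1 u h hDu ℓ hℓ hℓC 1 zero_le_one
    rw [sub_self, neg_zero, Real.rpow_zero, Real.rpow_one, mul_one] at hone
    exact (mul_le_mul_of_nonneg_right (min_le_left _ _) (by positivity)).trans
      (h.mul_rpow_le_structFun_of_le_one hDu (burgersT₁_pos hD hCt).le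
        (burgersT₁_lt_burgersT₂ hD hCt σ).le hℓ hone hp hp1)
  · exact (mul_le_mul_of_nonneg_right (min_le_right _ _) (by positivity)).trans
      (hlower ν hν1 u h hDu ℓ hℓ hℓC p hp)
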